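/- arXiv:1404.3395 — 4 statements merged into one kernel-verified Lean document; each statement's English description precedes it below -/
import Mathlib

section
/- For integers n ≥ 2 and 1 ≤ k ≤ n-1, the union over all permutations τ of {1,...,n} of the sets of parenthesizations with k couples of parentheses of the list τ(1),...,τ(n) (i.e., the set OS₂((1,...,n),k)) is in bijection with the set of admissible internally ordered k-partitions of {1,...,n+k-1}. -/
/-- An admissible internally ordered `k`-partition of `{1,...,m}`. -/
def IsIOPart (m k : ℕ) (P : Finset (List ℕ)) : Prop :=
  P.card = k ∧ (∀ l ∈ P, l.Nodup ∧ 2 ≤ l.length) ∧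
  (∀ l ∈ P, ∀ l' ∈ P, l ≠ l' → ∀ x ∈ l, x ∉ l') ∧
  (∀ x, x ∈ Finset.Icc 1 m ↔ ∃ l ∈ P, x ∈ l)

/-- A parenthesization with `k` couples of parentheses of a list of `n` entries,
viewed as a nested family of `k` intervals of positions `{1,...,n}`: each interval
has cardinality ≥ 2, the family contains the full interval, and any two members
are nested or disjoint. -/
def IsIntNested (n k : ℕ) (S : Finset (Finset ℕ)) : Prop :=
  S.card = k ∧ Finset.Icc 1 n ∈ S ∧
  (∀ A ∈ S, 2 ≤ A.card ∧ ∃ i j, 1 ≤ i ∧ i ≤ j ∧ j ≤ n ∧ A = Finset.Icc i j) ∧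
  (∀ A ∈ S, ∀ B ∈ S, A ⊆ B ∨ B ⊆ A ∨ Disjoint A B)

/-!
Both sides are counted in closed form. A parenthesization with `k` couples of a list of `n` entries
is an ordered tree with `n` leaves and `k` inner nodes, each having at least two children. More
generally, let `f(n, k, r)` be the number of such ordered forests with `r` roots. The last root of a
forest is either a leaf, which can be removed, or an inner node, whose removal leaves a forest with
at least `r + 1` roots. The resulting recurrence is solved by the Kirkman-Cayley type formula
`k f(n, k, r) = r C(n + k - 1, k - 1) C(n - r - 1, k - 1)`.

An admissible `k`-partition is a set of `k` blocks whose exponential generating function is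
`x ^ 2 / (1 - x)`. Hence an `m`-element set has `p` admissible `k`-partitions, where
`k! p = m! [x ^ m] (x ^ 2 / (1 - x)) ^ k = m! C(m - k - 1, k - 1)`.

For `r = 1` and `m = n + k - 1` these two formulas give `n! f(n, k, 1) = p`.
-/

section

open Finset

/-! ### Counting ordered forests -/

/-- `S` is a laminar family of intervals of at least two positions out of `{1, ..., n}`, i.e. an
ordered forest with leaves `1, ..., n` whose inner nodes have at least two children. The pair
`(a, b)` encodes the interval of the positions `a + 1, ..., b`, that is, the numbers of the
boundaries before and after it; the roots of the forest are the maximal intervals and the positions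
that lie in no interval. -/
structure IsLaminarOn (n : ℕ) (S : Finset (ℕ × ℕ)) : Prop where
  add_two_le : ∀ p ∈ S, p.1 + 2 ≤ p.2
  le : ∀ p ∈ S, p.2 ≤ n
  laminar : ∀ p ∈ S, ∀ q ∈ S,
    (p.1 ≤ q.1 ∧ q.2 ≤ p.2) ∨ (q.1 ≤ p.1 ∧ p.2 ≤ q.2) ∨ p.2 ≤ q.1 ∨ q.2 ≤ p.1

/-- The boundary `c` is interior to no interval of `S`, so that it separates two trees of the forest
encoded by `S` or bounds the whole forest. -/
def IsCut (S : Finset (ℕ × ℕ)) (c : ℕ) : Prop :=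
  ∀ p ∈ S, c ≤ p.1 ∨ p.2 ≤ c

instance (S : Finset (ℕ × ℕ)) : DecidablePred (IsCut S) :=
  fun _ => Finset.decidableDforallFinset

/-- The number of trees of the forest with leaves `1, ..., n` encoded by `S`, each tree being
counted by the boundary on its left. -/
def numComponents (n : ℕ) (S : Finset (ℕ × ℕ)) : ℕ :=
  Nat.count (IsCut S) n

namespace IsCut

variable {n a b c : ℕ} {S : Finset (ℕ × ℕ)}

theorem zero (S : Finset (ℕ × ℕ)) : IsCut S 0 := fun _ _ => .inl (Nat.zero_le _)

theorem insert_iff {p : ℕ × ℕ} : IsCut (insert p S) c ↔ (c ≤ p.1 ∨ p.2 ≤ c) ∧ IsCut S c :=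
  forall_mem_insert _ _ _

theorem infinite (S : Finset (ℕ × ℕ)) : {c | IsCut S c}.Infinite := by
  refine Set.infinite_of_forall_exists_gt fun a =>
    ⟨a + S.sup Prod.snd + 1, fun p hp => ?_, by omega⟩
  have : p.2 ≤ S.sup Prod.snd := le_sup (f := Prod.snd) hp
  omega

theorem nth_self (S : Finset (ℕ × ℕ)) (r : ℕ) : IsCut S (Nat.nth (IsCut S) r) :=
  Nat.nth_mem_of_infinite (infinite S) r

theorem count_nth (S : Finset (ℕ × ℕ)) (r : ℕ) :
    Nat.count (IsCut S) (Nat.nth (IsCut S) r) = r :=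
  Nat.count_nth_of_infinite (infinite S) r

theorem insert_iff_of_le (h : c ≤ a) : IsCut (insert (a, b) S) c ↔ IsCut S c := by
  rw [insert_iff]
  exact and_iff_right (.inl h)

theorem count_insert_of_le (h : c ≤ a) :
    Nat.count (IsCut (insert (a, b) S)) c = Nat.count (IsCut S) c := by
  simp only [Nat.count_eq_card_filter_range]
  congr 1
  exact filter_congr fun i hi => insert_iff_of_le (by have := mem_range.1 hi; omega)

theorem numComponents_insert (ha : IsCut S a) (han : a < n) :
    numComponents n (insert (a, n) S) = Nat.count (IsCut S) a + 1 := by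
  have hinside : ∀ c, a < c → c < n → ¬ IsCut (insert (a, n) S) c := fun c hac hcn h => by
    have := h (a, n) (mem_insert_self _ _)
    omega
  rw [numComponents, Nat.count_eq_card_filter_range, ← count_insert_of_le (b := n) le_rfl,
    ← Nat.count_succ_eq_succ_count_iff.2 ((insert_iff_of_le (b := n) le_rfl).2 ha),
    Nat.count_eq_card_filter_range]
  congr 1
  ext c
  simp only [mem_filter, mem_range]
  exact and_congr_left fun hc => ⟨fun h => by by_contra; exact hinside c (by omega) h hc, by omega⟩

theorem nth_insert (ha : IsCut S a) :
    Nat.nth (IsCut (insert (a, b) S)) (Nat.count (IsCut S) a) = a := by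
  rw [← count_insert_of_le (b := b) le_rfl]
  exact Nat.nth_count ((insert_iff_of_le le_rfl).2 ha)

theorem add_two_le_of_count_add_two_le (ha : IsCut S a)
    (h : Nat.count (IsCut S) a + 2 ≤ numComponents n S) : a + 2 ≤ n :=
  Nat.lt_of_count_lt_count (p := IsCut S) <| by
    rw [Nat.count_succ_eq_succ_count_iff.2 ha]
    exact h

theorem notMem_of_count_add_two_le (ha : IsCut S a)
    (h : Nat.count (IsCut S) a + 2 ≤ numComponents n S) : (a, n) ∉ S := fun hmem => by
  have han := ha.add_two_le_of_count_add_two_le h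
  have := ha.numComponents_insert (n := n) (by omega)
  rw [insert_eq_of_mem hmem] at this
  omega

end IsCut

namespace IsLaminarOn

variable {n a b : ℕ} {S T : Finset (ℕ × ℕ)}

theorem mono (hS : IsLaminarOn n S) (h : T ⊆ S) : IsLaminarOn n T where
  add_two_le p hp := hS.add_two_le p (h hp)
  le p hp := hS.le p (h hp)
  laminar p hp q hq := hS.laminar p (h hp) q (h hq)

theorem succ_iff : IsLaminarOn (n + 1) S ∧ (∀ p ∈ S, p.2 ≠ n + 1) ↔ IsLaminarOn n S where
  mp h :=
    { add_two_le := h.1.add_two_le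
      le := fun p hp => by have := h.1.le p hp; have := h.2 p hp; omega
      laminar := h.1.laminar }
  mpr h :=
    ⟨{ add_two_le := h.add_two_le
       le := fun p hp => by have := h.le p hp; omega
       laminar := h.laminar },
      fun p hp => by have := h.le p hp; omega⟩

theorem isCut (hS : IsLaminarOn n S) : IsCut S n := fun p hp => .inr (hS.le p hp)

theorem numComponents_succ (hS : IsLaminarOn n S) :
    numComponents (n + 1) S = numComponents n S + 1 :=
  Nat.count_succ_eq_succ_count_iff.2 hS.isCut

theorem insert_of_isCut (hS : IsLaminarOn n S) (ha : IsCut S a) (han : a + 2 ≤ n) :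
    IsLaminarOn n (insert (a, n) S) where
  add_two_le := (forall_mem_insert _ _ _).2 ⟨han, hS.add_two_le⟩
  le := (forall_mem_insert _ _ _).2 ⟨le_rfl, hS.le⟩
  laminar := by
    have key : ∀ p ∈ S, (a ≤ p.1 ∧ p.2 ≤ n) ∨ p.2 ≤ a := fun p hp => by
      have := ha p hp
      have := hS.le p hp
      omega
    refine (forall_mem_insert _ _ _).2 ⟨(forall_mem_insert _ _ _).2 ⟨by simp, fun q hq => ?_⟩,
      fun p hp => (forall_mem_insert _ _ _).2 ⟨?_, hS.laminar p hp⟩⟩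
    · have := key q hq
      dsimp only
      omega
    · have := key p hp
      dsimp only
      omega

/-- Overlapping members of a laminar family are nested, so the last interval in a chain of
overlapping ones contains the whole chain. -/
theorem exists_mem_of_forall_not_isCut (hS : IsLaminarOn n S) (hab : a + 2 ≤ b)
    (h : ∀ c, a < c → c < b → ¬ IsCut S c) : ∃ p ∈ S, p.1 ≤ a ∧ b ≤ p.2 := by
  induction b, hab using Nat.le_induction with
  | base =>
    have hcut := h (a + 1) (by omega) (by omega)
    simp only [IsCut, not_forall, not_or] at hcut
    obtain ⟨p, hp, h₁, h₂⟩ := hcut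
    exact ⟨p, hp, by omega, by omega⟩
  | succ b hab ih =>
    obtain ⟨p, hp, hpa, hbp⟩ := ih fun c hac hcb => h c hac (by omega)
    have hcut := h b (by omega) (by omega)
    simp only [IsCut, not_forall, not_or] at hcut
    obtain ⟨q, hq, h₁, h₂⟩ := hcut
    have := hS.laminar p hp q hq
    by_cases hpb : b < p.2
    · exact ⟨p, hp, hpa, hpb⟩
    · exact ⟨q, hq, by omega, by omega⟩

theorem mem_of_numComponents_le (hS : IsLaminarOn n S) (ha : IsCut S a) (han : a + 2 ≤ n)
    (h : numComponents n S ≤ Nat.count (IsCut S) a + 1) : (a, n) ∈ S := by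
  have hcut : ∀ c, a < c → c < n → ¬ IsCut S c := fun c hac hcn hc => by
    have h₁ := Nat.count_strict_mono ha hac
    have h₂ := Nat.count_strict_mono hc hcn
    rw [numComponents] at h
    omega
  obtain ⟨p, hp, hpa, hnp⟩ := hS.exists_mem_of_forall_not_isCut han hcut
  have := ha p hp
  have := hS.le p hp
  rwa [show (a, n) = p from Prod.ext (by dsimp only; omega) (by dsimp only; omega)]

theorem numComponents_eq_one_iff (hS : IsLaminarOn n S) (hn : 2 ≤ n) :
    numComponents n S = 1 ↔ (0, n) ∈ S := by
  constructor
  · intro h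
    exact hS.mem_of_numComponents_le (IsCut.zero S) (by omega) (by rw [h, Nat.count_zero])
  · intro h
    rw [← insert_eq_of_mem h, IsCut.numComponents_insert (.zero S) (by omega), Nat.count_zero]

theorem count_add_two_le_numComponents (hS : IsLaminarOn n S) (ha : IsCut S a) (han : a + 2 ≤ n)
    (hmem : (a, n) ∉ S) : Nat.count (IsCut S) a + 2 ≤ numComponents n S := by
  by_contra h
  exact hmem (hS.mem_of_numComponents_le ha han (by omega))

theorem exists_eq_insert (hS : IsLaminarOn n S) {r : ℕ} (hr : numComponents n S = r + 1)
    (hn : ∃ p ∈ S, p.2 = n) :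
    ∃ a T, S = insert (a, n) T ∧ (a, n) ∉ T ∧ IsCut T a ∧ Nat.count (IsCut T) a = r := by
  obtain ⟨p, hp, hpn⟩ := hn
  set a := Nat.nth (IsCut S) r
  have ha : IsCut S a := IsCut.nth_self S r
  have hcount : Nat.count (IsCut S) a = r := IsCut.count_nth S r
  have han : a < n := Nat.nth_lt_of_lt_count (by rw [← numComponents]; omega)
  have hmem : (a, n) ∈ S := by
    have := ha p hp
    have := hS.add_two_le p hp
    exact hS.mem_of_numComponents_le ha (by omega) (by rw [hr, hcount])
  rw [← insert_erase hmem] at ha hcount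
  exact ⟨a, S.erase (a, n), (insert_erase hmem).symm, notMem_erase _ _,
    (IsCut.insert_iff_of_le le_rfl).1 ha, by rwa [IsCut.count_insert_of_le le_rfl] at hcount⟩

end IsLaminarOn

open scoped Classical in
/-- The forests with leaves `1, ..., n` and `k` inner nodes. -/
noncomputable def laminarFamilies (n k : ℕ) : Finset (Finset (ℕ × ℕ)) :=
  {S ∈ (range n ×ˢ range (n + 1)).powerset | IsLaminarOn n S ∧ #S = k}

theorem mem_laminarFamilies {n k : ℕ} {S : Finset (ℕ × ℕ)} :
    S ∈ laminarFamilies n k ↔ IsLaminarOn n S ∧ #S = k := by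
  classical
  rw [laminarFamilies, mem_filter, and_iff_right_iff_imp, mem_powerset]
  rintro ⟨hS, -⟩ p hp
  have := hS.add_two_le p hp
  have := hS.le p hp
  simp only [mem_product, mem_range]
  omega

theorem laminarFamilies_zero (n : ℕ) : laminarFamilies n 0 = {∅} := by
  ext S
  rw [mem_laminarFamilies, card_eq_zero, mem_singleton, and_iff_right_iff_imp]
  rintro rfl
  exact ⟨by simp, by simp, by simp⟩

/-- The number of ordered forests with `n` leaves, `k` inner nodes, each having at least two
children, and `r` roots. -/
noncomputable def forestCount (n k r : ℕ) : ℕ :=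
  #{S ∈ laminarFamilies n k | numComponents n S = r}

theorem forestCount_zero (n r : ℕ) : forestCount n 0 r = if n = r then 1 else 0 := by
  have : numComponents n ∅ = n := Nat.count_of_forall fun _ _ => by simp [IsCut]
  rw [forestCount, laminarFamilies_zero, filter_singleton, this]
  split_ifs <;> rfl

theorem forestCount_succ_self (n k : ℕ) : forestCount n (k + 1) n = 0 := by
  rw [forestCount, card_eq_zero, filter_eq_empty_iff]
  intro S hS hn
  rw [mem_laminarFamilies] at hS
  obtain ⟨p, hp⟩ := card_pos.1 (by omega : 0 < #S)
  have := hS.1.add_two_le p hp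
  have := hS.1.le p hp
  have := Nat.count_iff_forall.1 hn (p.1 + 1) (by omega) p hp
  omega

theorem forestCount_succ_zero (n k : ℕ) : forestCount (n + 1) k 0 = 0 := by
  rw [forestCount, card_eq_zero, filter_eq_empty_iff]
  intro S _ h0
  exact Nat.count_iff_forall_not.1 h0 0 n.succ_pos (IsCut.zero S)

/-- Deleting the last root, when it is not a leaf, exposes its children, of which there are at least
two. Conversely, the root to restore starts at the `r`-th cut. -/
theorem card_filter_numComponents_eq_and_exists_snd_eq (n k r : ℕ) :
    #{S ∈ laminarFamilies n (k + 1) | numComponents n S = r + 1 ∧ ∃ p ∈ S, p.2 = n} =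
      #{S ∈ laminarFamilies n k | r + 2 ≤ numComponents n S} := by
  symm
  refine card_nbij (fun T => insert (Nat.nth (IsCut T) r, n) T) (fun T hT => ?_)
    (Set.LeftInvOn.injOn (f₁' := fun S => S.erase (Nat.nth (IsCut S) r, n)) fun T hT => ?_)
    fun S hS => ?_
  · simp only [coe_filter, Set.mem_ofPred_eq, mem_laminarFamilies] at hT ⊢
    obtain ⟨⟨hT, hk⟩, hr⟩ := hT
    have hcut := IsCut.nth_self T r
    have hcount := IsCut.count_nth T r
    set a := Nat.nth (IsCut T) r
    rw [← hcount] at hr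
    have han := hcut.add_two_le_of_count_add_two_le hr
    refine ⟨⟨hT.insert_of_isCut hcut han, ?_⟩, ?_, (a, n), mem_insert_self _ _, rfl⟩
    · rw [card_insert_of_notMem (hcut.notMem_of_count_add_two_le hr), hk]
    · rw [hcut.numComponents_insert (by omega), hcount]
  · simp only [coe_filter, Set.mem_ofPred_eq] at hT
    have hcut := IsCut.nth_self T r
    have hnth := hcut.nth_insert (b := n)
    rw [IsCut.count_nth] at hnth
    dsimp only
    rw [hnth, erase_insert (hcut.notMem_of_count_add_two_le (by rw [IsCut.count_nth]; exact hT.2))]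
  · simp only [coe_filter, Set.mem_ofPred_eq, mem_laminarFamilies] at hS
    obtain ⟨⟨hS, hk⟩, hr, hn⟩ := hS
    obtain ⟨a, T, rfl, hmem, hcut, rfl⟩ := hS.exists_eq_insert hr hn
    have hT := hS.mono (subset_insert _ _)
    have han := hS.add_two_le _ (mem_insert_self _ _)
    refine ⟨T, ?_, by dsimp only; rw [Nat.nth_count hcut]⟩
    simp only [coe_filter, Set.mem_ofPred_eq, mem_laminarFamilies]
    rw [card_insert_of_notMem hmem, Nat.add_right_cancel_iff] at hk
    exact ⟨⟨hT, hk⟩, hT.count_add_two_le_numComponents hcut han hmem⟩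

theorem filter_numComponents_eq_and_forall_snd_ne (n k r : ℕ) :
    {S ∈ laminarFamilies (n + 1) k | numComponents (n + 1) S = r + 1 ∧ ∀ p ∈ S, p.2 ≠ n + 1} =
      {S ∈ laminarFamilies n k | numComponents n S = r} := by
  ext S
  simp only [mem_filter, mem_laminarFamilies]
  constructor
  · rintro ⟨⟨hS, hk⟩, hr, hne⟩
    have hS' := IsLaminarOn.succ_iff.1 ⟨hS, hne⟩
    rw [hS'.numComponents_succ, Nat.add_right_cancel_iff] at hr
    exact ⟨⟨hS', hk⟩, hr⟩
  · rintro ⟨⟨hS, hk⟩, hr⟩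
    obtain ⟨hS', hne⟩ := IsLaminarOn.succ_iff.2 hS
    exact ⟨⟨hS', hk⟩, by rw [hS.numComponents_succ, hr], hne⟩

theorem forestCount_succ_succ (n k r : ℕ) :
    forestCount (n + 1) (k + 1) (r + 1) = forestCount n (k + 1) r +
      #{S ∈ laminarFamilies (n + 1) k | r + 2 ≤ numComponents (n + 1) S} := by
  rw [← card_filter_numComponents_eq_and_exists_snd_eq, forestCount.eq_def n,
    ← filter_numComponents_eq_and_forall_snd_ne, ← filter_filter, ← filter_filter, forestCount,
    ← card_filter_add_card_filter_not (s := filter _ _) fun S => ∀ p ∈ S, p.2 ≠ n + 1]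
  simp only [not_forall, ne_eq, not_not, exists_prop]

theorem card_filter_le_numComponents (n k r : ℕ) :
    #{S ∈ laminarFamilies n k | r ≤ numComponents n S} =
      forestCount n k r + #{S ∈ laminarFamilies n k | r + 1 ≤ numComponents n S} := by
  rw [forestCount, ← card_union_of_disjoint]
  · rw [← filter_or]
    congr! 3
    omega
  · exact disjoint_filter.2 fun S _ h => by omega

/-- Subtracting two instances of `forestCount_succ_succ` cancels all the families with more than
`r + 2` components. -/
theorem forestCount_recurrence (n k r : ℕ) :
    forestCount (n + 1) (k + 1) (r + 1) + forestCount n (k + 1) (r + 1) =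
      forestCount n (k + 1) r + forestCount (n + 1) (k + 1) (r + 2) +
        forestCount (n + 1) k (r + 2) := by
  rw [forestCount_succ_succ n k r, forestCount_succ_succ n k (r + 1), card_filter_le_numComponents,
    r.add_right_comm 1 2]
  omega

theorem forestCount_self_add_one (k r : ℕ) :
    forestCount (r + 1) (k + 1) r = if k = 0 then r else 0 := by
  induction r with
  | zero => rw [forestCount_succ_zero, ite_self]
  | succ r ih =>
    have h := forestCount_recurrence (r + 1) k r
    rw [forestCount_succ_self, forestCount_succ_self, ih] at h
    split_ifs with hk
    · rw [hk, forestCount_zero, if_pos rfl] at h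
      rw [hk]
      simpa using h
    · obtain ⟨j, rfl⟩ := Nat.exists_eq_succ_of_ne_zero hk
      rw [forestCount_succ_self] at h
      simpa using h

theorem forestCount_one (r s : ℕ) : forestCount (r + s + 1) 1 r = r := by
  induction s generalizing r with
  | zero => exact forestCount_self_add_one 0 r
  | succ s ihs =>
    induction r with
    | zero => exact forestCount_succ_zero _ _
    | succ r ihr =>
      have h := forestCount_recurrence (r + s + 2) 0 r
      have h₁ := ihs (r + 1)
      have h₂ := ihs (r + 2)
      have h₀ := forestCount_zero (r + s + 3) (r + 2)
      rw [if_neg (by omega)] at h₀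
      ring_nf at h h₀ h₁ h₂ ihr ⊢
      omega

theorem choose_mul_choose_recurrence (r s k : ℕ) :
    (k + 1) * (r * (r + s + k + 3).choose (k + 1) * (s + 1).choose (k + 1) +
        (r + 2) * (r + s + k + 4).choose (k + 1) * s.choose (k + 1)) +
      (k + 2) * ((r + 2) * (r + s + k + 3).choose k * s.choose k) =
    (k + 1) * ((r + 1) * (r + s + k + 4).choose (k + 1) * (s + 1).choose (k + 1) +
        (r + 1) * (r + s + k + 3).choose (k + 1) * s.choose (k + 1)) := by
  have hN := Nat.choose_succ_right_eq (r + s + k + 3) k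
  rw [show r + s + k + 3 - k = r + s + 3 by omega] at hN
  have hs : (s.choose (k + 1) * (k + 1) : ℤ) = s.choose k * (s - k) := by
    obtain hsk | hks := lt_or_ge s k
    · simp [Nat.choose_eq_zero_of_lt hsk, Nat.choose_eq_zero_of_lt (hsk.trans k.lt_succ_self)]
    · have := Nat.choose_succ_right_eq s k
      zify [hks] at this
      exact this
  rw [Nat.choose_succ_succ' (r + s + k + 3), Nat.choose_succ_succ' s]
  zify at hN ⊢
  linear_combination (r + s + k + 3).choose k * hs - s.choose k * hN

theorem succ_mul_forestCount (k r s : ℕ) :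
    (k + 1) * forestCount (r + s + 1) (k + 1) r = r * (r + s + 1 + k).choose k * s.choose k := by
  induction k generalizing r s with
  | zero => simp [forestCount_one]
  | succ k ihk =>
    induction s generalizing r with
    | zero => simp [forestCount_self_add_one]
    | succ s ihs =>
      induction r with
      | zero => rw [forestCount_succ_zero]; simp
      | succ r ihr =>
        have h := forestCount_recurrence (r + s + 2) (k + 1) r
        have h₁ := ihs (r + 1)
        have h₂ := ihs (r + 2)
        have h₃ := ihk (r + 2) s
        have hid := choose_mul_choose_recurrence r s k
        refine Nat.eq_of_mul_eq_mul_left k.succ_pos ?_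
        ring_nf at h h₁ h₂ h₃ hid ihr ⊢
        zify at h h₁ h₂ h₃ hid ihr ⊢
        linear_combination (k + 1) * (k + 2) * h - (k + 1) * h₁ + (k + 1) * h₂ + (k + 2) * h₃
          + (k + 1) * ihr + hid

/-! ### Parenthesizations as ordered trees -/

/-- The set of positions strictly right of the boundary `p.1` and left of the boundary `p.2`. -/
def positions (p : ℕ × ℕ) : Finset ℕ := Ioc p.1 p.2

theorem positions_subset_iff {p q : ℕ × ℕ} (hp : p.1 < p.2) :
    positions p ⊆ positions q ↔ q.1 ≤ p.1 ∧ p.2 ≤ q.2 := by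
  rw [positions, positions, ← coe_subset, coe_Ioc, coe_Ioc, Set.Ioc_subset_Ioc_iff hp, and_comm]

theorem disjoint_positions_iff {p q : ℕ × ℕ} (hp : p.1 < p.2) (hq : q.1 < q.2) :
    Disjoint (positions p) (positions q) ↔ p.2 ≤ q.1 ∨ q.2 ≤ p.1 := by
  rw [positions, positions, ← disjoint_coe, coe_Ioc, coe_Ioc, Set.Ioc_disjoint_Ioc]
  omega

theorem injOn_positions : Set.InjOn positions {p | p.1 < p.2} := fun p hp q hq h => by
  have h₁ := (positions_subset_iff hp).1 h.subset
  have h₂ := (positions_subset_iff hq).1 h.superset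
  exact Prod.ext (by omega) (by omega)

theorem card_positions (p : ℕ × ℕ) : #(positions p) = p.2 - p.1 := Nat.card_Ioc _ _

theorem positions_eq_Icc (p : ℕ × ℕ) : positions p = Icc (p.1 + 1) p.2 :=
  (Icc_add_one_left_eq_Ioc _ _).symm

theorem isIntNested_image_positions_iff {n k : ℕ} {S : Finset (ℕ × ℕ)}
    (hS : ∀ p ∈ S, p.1 + 2 ≤ p.2 ∧ p.2 ≤ n) (hn : 0 < n) :
    IsIntNested n k (S.image positions) ↔ (IsLaminarOn n S ∧ #S = k) ∧ (0, n) ∈ S := by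
  have hlt : (S : Set (ℕ × ℕ)) ⊆ {p | p.1 < p.2} := fun p hp => by
    have := hS p hp
    simp only [Set.mem_ofPred_eq]
    omega
  have hfull : Icc 1 n ∈ S.image positions ↔ (0, n) ∈ S := by
    rw [← positions_eq_Icc (0, n), ← mem_coe, coe_image,
      injOn_positions.mem_image_iff hlt hn]
    rfl
  have hmem : ∀ A ∈ S.image positions,
      2 ≤ #A ∧ ∃ i j, 1 ≤ i ∧ i ≤ j ∧ j ≤ n ∧ A = Icc i j := by
    refine forall_mem_image.2 fun p hp => ⟨?_, p.1 + 1, p.2, ?_⟩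
    · have := hS p hp
      rw [card_positions]
      omega
    · have := hS p hp
      exact ⟨by omega, by omega, this.2, positions_eq_Icc p⟩
  have hlaminar : (∀ A ∈ S.image positions, ∀ B ∈ S.image positions,
      A ⊆ B ∨ B ⊆ A ∨ Disjoint A B) ↔ IsLaminarOn n S := by
    simp only [forall_mem_image]
    refine ⟨fun h => ⟨fun p hp => (hS p hp).1, fun p hp => (hS p hp).2, fun p hp q hq => ?_⟩,
      fun h p hp q hq => ?_⟩
    · have := h hp hq
      rw [positions_subset_iff (hlt hp), positions_subset_iff (hlt hq),
        disjoint_positions_iff (hlt hp) (hlt hq)] at this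
      omega
    · have := h.laminar p hp q hq
      rw [positions_subset_iff (hlt hp), positions_subset_iff (hlt hq),
        disjoint_positions_iff (hlt hp) (hlt hq)]
      omega
  rw [IsIntNested, card_image_of_injOn (injOn_positions.mono hlt), hfull, hlaminar]
  tauto

/-- The parenthesizations with `k` couples of parentheses of a list of `n` entries, obtained from
the laminar families with a single component by passing from boundaries to positions. -/
noncomputable def intNestedFamilies (n k : ℕ) : Finset (Finset (Finset ℕ)) :=
  {S ∈ laminarFamilies n k | numComponents n S = 1}.image (image positions)

theorem mem_intNestedFamilies {n k : ℕ} (hn : 2 ≤ n) {F : Finset (Finset ℕ)} :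
    F ∈ intNestedFamilies n k ↔ IsIntNested n k F := by
  simp only [intNestedFamilies, mem_image, mem_filter, mem_laminarFamilies]
  constructor
  · rintro ⟨S, ⟨⟨hS, hk⟩, hone⟩, rfl⟩
    exact (isIntNested_image_positions_iff (fun p hp => ⟨hS.add_two_le p hp, hS.le p hp⟩)
      (by omega)).2 ⟨⟨hS, hk⟩, (hS.numComponents_eq_one_iff hn).1 hone⟩
  · intro hF
    have hsub : (F : Set (Finset ℕ)) ⊆ positions '' {p | p.1 + 2 ≤ p.2 ∧ p.2 ≤ n} := by
      intro A hA
      obtain ⟨hcard, i, j, hi, -, hj, rfl⟩ := hF.2.2.1 A hA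
      rw [Nat.card_Icc] at hcard
      refine ⟨(i - 1, j), ⟨by dsimp only; omega, hj⟩, ?_⟩
      rw [positions_eq_Icc, Nat.sub_add_cancel hi]
    obtain ⟨S, hS, rfl⟩ := subset_set_image_iff.1 hsub
    rw [isIntNested_image_positions_iff hS (by omega)] at hF
    exact ⟨S, ⟨hF.1, (hF.1.1.numComponents_eq_one_iff hn).2 hF.2⟩, rfl⟩

theorem card_intNestedFamilies (n k : ℕ) : #(intNestedFamilies n k) = forestCount n k 1 := by
  refine card_image_of_injOn (injOn_image_of_biUnion_injOn (injOn_positions.mono ?_))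
  intro p hp
  obtain ⟨S, hS, hpS⟩ := mem_biUnion.1 hp
  have := (mem_laminarFamilies.1 (mem_filter.1 hS).1).1.add_two_le p hpS
  simp only [Set.mem_ofPred_eq]
  omega

/-! ### Counting admissible partitions -/

section AdmissiblePartitions

variable {α : Type*}

/-- The lists enumerating the elements of `V` without repetition, i.e. the linear orders on `V`. -/
def orderings (V : Finset α) : Finset (List α) :=
  ⟨V.val.lists, Multiset.lists_nodup_finset V⟩

theorem card_orderings (V : Finset α) : #(orderings V) = (#V).factorial := by
  rw [orderings, card_mk, ← coe_toList, Multiset.lists_coe, Multiset.coe_card,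
    List.length_permutations, length_toList]

variable [DecidableEq α]

theorem mem_orderings {V : Finset α} {l : List α} :
    l ∈ orderings V ↔ l.Nodup ∧ l.toFinset = V := by
  rw [orderings, mem_mk, Multiset.mem_lists_iff]
  constructor
  · intro h
    have hl : l.Nodup := by simpa [h] using V.nodup
    refine ⟨hl, ?_⟩
    rw [← val_inj, List.toFinset_val, hl.dedup, h]
    rfl
  · rintro ⟨hl, rfl⟩
    rw [List.toFinset_val, hl.dedup]
    rfl

/-- `P` is a partition of `U` into `k` linearly ordered blocks of at least two elements, each block
being encoded by the list of its elements in increasing order. -/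
structure IsAdmissiblePartition (U : Finset α) (k : ℕ) (P : Finset (List α)) : Prop where
  card_eq : #P = k
  nodup_and_two_le : ∀ l ∈ P, l.Nodup ∧ 2 ≤ l.length
  pairwiseDisjoint : (P : Set (List α)).PairwiseDisjoint List.toFinset
  biUnion_eq : P.biUnion List.toFinset = U

theorem isIOPart_iff {m k : ℕ} {P : Finset (List ℕ)} :
    IsIOPart m k P ↔ IsAdmissiblePartition (Icc 1 m) k P := by
  have hdisj : (∀ l ∈ P, ∀ l' ∈ P, l ≠ l' → ∀ x ∈ l, x ∉ l') ↔
      (P : Set (List ℕ)).PairwiseDisjoint List.toFinset := by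
    simp only [Set.PairwiseDisjoint, Set.Pairwise, Function.onFun, disjoint_left, mem_coe,
      List.mem_toFinset]
  have hcover : (∀ x, x ∈ Icc 1 m ↔ ∃ l ∈ P, x ∈ l) ↔ P.biUnion List.toFinset = Icc 1 m := by
    simp only [Finset.ext_iff, mem_biUnion, List.mem_toFinset, iff_comm]
  rw [IsIOPart, hdisj, hcover]
  exact ⟨fun ⟨h₁, h₂, h₃, h₄⟩ => ⟨h₁, h₂, h₃, h₄⟩, fun ⟨h₁, h₂, h₃, h₄⟩ => ⟨h₁, h₂, h₃, h₄⟩⟩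

/-- The lists that may occur as a block of an admissible partition of `U`. -/
def blocks (U : Finset α) : Finset (List α) :=
  {V ∈ U.powerset | 2 ≤ #V}.biUnion orderings

theorem mem_blocks {U : Finset α} {l : List α} :
    l ∈ blocks U ↔ l.Nodup ∧ 2 ≤ l.length ∧ l.toFinset ⊆ U := by
  simp only [blocks, mem_biUnion, mem_filter, mem_powerset, mem_orderings]
  constructor
  · rintro ⟨V, ⟨hVU, hV⟩, hl, rfl⟩
    rw [List.toFinset_card_of_nodup hl] at hV
    exact ⟨hl, hV, hVU⟩
  · rintro ⟨hl, h2, hU⟩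
    exact ⟨l.toFinset, ⟨hU, by rwa [List.toFinset_card_of_nodup hl]⟩, hl, rfl⟩

theorem disjoint_and_union_eq_iff {A B U : Finset α} :
    Disjoint A B ∧ A ∪ B = U ↔ A ⊆ U ∧ B = U \ A := by
  constructor
  · rintro ⟨hdisj, rfl⟩
    exact ⟨subset_union_left, (union_sdiff_cancel_left hdisj).symm⟩
  · rintro ⟨hU, rfl⟩
    exact ⟨disjoint_sdiff, union_sdiff_of_subset hU⟩

namespace IsAdmissiblePartition

variable {U : Finset α} {k : ℕ} {P : Finset (List α)} {l : List α}

theorem subset_blocks (hP : IsAdmissiblePartition U k P) : P ⊆ blocks U := fun l hl =>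
  mem_blocks.2 ⟨(hP.nodup_and_two_le l hl).1, (hP.nodup_and_two_le l hl).2,
    hP.biUnion_eq ▸ subset_biUnion_of_mem _ hl⟩

theorem notMem_of_sdiff (hP : IsAdmissiblePartition (U \ l.toFinset) k P) : l ∉ P := fun hl => by
  obtain ⟨-, h2, hsub⟩ := mem_blocks.1 (hP.subset_blocks hl)
  have : l.toFinset = ∅ :=
    (disjoint_self_iff_empty _).1 (disjoint_of_subset_left hsub sdiff_disjoint)
  rw [List.toFinset_eq_empty_iff] at this
  simp [this] at h2

theorem insert_iff (hl : l ∉ P) :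
    IsAdmissiblePartition U (k + 1) (insert l P) ↔
      l ∈ blocks U ∧ IsAdmissiblePartition (U \ l.toFinset) k P := by
  have hdisj : (insert l P : Set (List α)).PairwiseDisjoint List.toFinset ↔
      (P : Set (List α)).PairwiseDisjoint List.toFinset ∧
        Disjoint l.toFinset (P.biUnion List.toFinset) := by
    rw [Set.pairwiseDisjoint_insert_of_notMem hl, disjoint_biUnion_right]
    rfl
  rw [mem_blocks]
  constructor
  · rintro ⟨hcard, hlen, hpd, hU⟩
    rw [card_insert_of_notMem hl, Nat.add_right_cancel_iff] at hcard
    rw [forall_mem_insert] at hlen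
    rw [coe_insert, hdisj] at hpd
    rw [biUnion_insert] at hU
    obtain ⟨hsub, hB⟩ := disjoint_and_union_eq_iff.1 ⟨hpd.2, hU⟩
    exact ⟨⟨hlen.1.1, hlen.1.2, hsub⟩, hcard, hlen.2, hpd.1, hB⟩
  · rintro ⟨⟨hnodup, h2, hsub⟩, hcard, hlen, hpd, hU⟩
    obtain ⟨hd, hB⟩ := disjoint_and_union_eq_iff.2 ⟨hsub, hU⟩
    refine ⟨?_, ?_, ?_, ?_⟩
    · rw [card_insert_of_notMem hl, hcard]
    · exact (forall_mem_insert _ _ _).2 ⟨⟨hnodup, h2⟩, hlen⟩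
    · rw [coe_insert, hdisj]
      exact ⟨hpd, hd⟩
    · rw [biUnion_insert, hB]

end IsAdmissiblePartition

open scoped Classical in
/-- The admissible internally ordered `k`-partitions of `U`. -/
noncomputable def admissiblePartitions (U : Finset α) (k : ℕ) : Finset (Finset (List α)) :=
  {P ∈ (blocks U).powerset | IsAdmissiblePartition U k P}

theorem mem_admissiblePartitions {U : Finset α} {k : ℕ} {P : Finset (List α)} :
    P ∈ admissiblePartitions U k ↔ IsAdmissiblePartition U k P := by
  classical
  rw [admissiblePartitions, mem_filter, mem_powerset, and_iff_right_iff_imp]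
  exact IsAdmissiblePartition.subset_blocks

theorem card_admissiblePartitions_zero (U : Finset α) :
    #(admissiblePartitions U 0) = if #U = 0 then 1 else 0 := by
  have : ∀ P, P ∈ admissiblePartitions U 0 ↔ P = ∅ ∧ U = ∅ := fun P => by
    rw [mem_admissiblePartitions]
    constructor
    · rintro ⟨hcard, -, -, hU⟩
      obtain rfl := card_eq_zero.1 hcard
      exact ⟨rfl, hU.symm⟩
    · rintro ⟨rfl, rfl⟩
      exact ⟨rfl, by simp, by simp, rfl⟩
  split_ifs with hU
  · exact card_eq_one.2 ⟨∅, ext fun P => by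
      rw [this, mem_singleton, and_iff_left (card_eq_zero.1 hU)]⟩
  · exact card_eq_zero.2 (eq_empty_of_forall_notMem fun P hP =>
      hU (card_eq_zero.2 ((this P).1 hP).2))

theorem card_filter_mem_admissiblePartitions {U : Finset α} {l : List α} (hl : l ∈ blocks U)
    (k : ℕ) :
    #{P ∈ admissiblePartitions U (k + 1) | l ∈ P} = #(admissiblePartitions (U \ l.toFinset) k) := by
  refine card_nbij' (fun P => P.erase l) (insert l) (fun P hP => ?_) (fun P hP => ?_)
    (fun P hP => ?_) (fun P hP => ?_)
  · simp only [coe_filter, Set.mem_ofPred_eq, mem_coe, mem_admissiblePartitions] at hP ⊢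
    rw [← insert_erase hP.2, IsAdmissiblePartition.insert_iff (notMem_erase _ _)] at hP
    exact hP.1.2
  · simp only [coe_filter, Set.mem_ofPred_eq, mem_coe, mem_admissiblePartitions] at hP ⊢
    exact ⟨(IsAdmissiblePartition.insert_iff hP.notMem_of_sdiff).2 ⟨hl, hP⟩, mem_insert_self _ _⟩
  · exact insert_erase (mem_filter.1 hP).2
  · exact erase_insert (mem_admissiblePartitions.1 hP).notMem_of_sdiff

theorem succ_mul_card_admissiblePartitions (U : Finset α) (k : ℕ) :
    (k + 1) * #(admissiblePartitions U (k + 1)) =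
      ∑ V ∈ U.powerset with 2 ≤ #V, (#V).factorial * #(admissiblePartitions (U \ V) k) := by
  have hcard : ∀ P ∈ admissiblePartitions U (k + 1), #{l ∈ blocks U | l ∈ P} = k + 1 := by
    intro P hP
    rw [mem_admissiblePartitions] at hP
    rw [filter_mem_eq_inter, inter_eq_right.2 hP.subset_blocks, hP.card_eq]
  have hdisj : ((U.powerset.filter (2 ≤ #·) : Finset _) : Set (Finset α)).PairwiseDisjoint
      orderings := fun V _ W _ hVW =>
    disjoint_left.2 fun l hV hW => hVW ((mem_orderings.1 hV).2.symm.trans (mem_orderings.1 hW).2)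
  calc (k + 1) * #(admissiblePartitions U (k + 1))
      = ∑ P ∈ admissiblePartitions U (k + 1), #{l ∈ blocks U | l ∈ P} := by
        rw [sum_congr rfl hcard, sum_const, smul_eq_mul, mul_comm]
    _ = ∑ l ∈ blocks U, #{P ∈ admissiblePartitions U (k + 1) | l ∈ P} :=
        sum_card_bipartiteAbove_eq_sum_card_bipartiteBelow fun P l => l ∈ P
    _ = ∑ l ∈ blocks U, #(admissiblePartitions (U \ l.toFinset) k) :=
        sum_congr rfl fun l hl => card_filter_mem_admissiblePartitions hl k
    _ = ∑ V ∈ U.powerset with 2 ≤ #V, ∑ l ∈ orderings V,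
          #(admissiblePartitions (U \ l.toFinset) k) := sum_biUnion hdisj
    _ = ∑ V ∈ U.powerset with 2 ≤ #V, (#V).factorial * #(admissiblePartitions (U \ V) k) :=
        sum_congr rfl fun V _ => by
          rw [← card_orderings, ← smul_eq_mul, ← sum_const]
          exact sum_congr rfl fun l hl => by rw [(mem_orderings.1 hl).2]

theorem sum_powerset_factorial_mul_coeff {R : Type*} [CommSemiring R] (U : Finset α)
    (f g : PowerSeries R) :
    ∑ V ∈ U.powerset, ((#V).factorial * PowerSeries.coeff #V f) *
        ((#(U \ V)).factorial * PowerSeries.coeff #(U \ V) g) =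
      (#U).factorial * PowerSeries.coeff #U (f * g) := by
  have hcard : ∀ V ∈ U.powerset, #(U \ V) = #U - #V := fun V hV =>
    card_sdiff_of_subset (mem_powerset.1 hV)
  rw [sum_congr rfl fun V hV => by rw [hcard V hV], sum_powerset_apply_card fun m =>
      (m.factorial * PowerSeries.coeff m f) *
        ((#U - m).factorial * PowerSeries.coeff (#U - m) g),
    PowerSeries.coeff_mul, Nat.sum_antidiagonal_eq_sum_range_succ_mk, mul_sum]
  refine sum_congr rfl fun m hm => ?_
  rw [← Nat.choose_mul_factorial_mul_factorial (Nat.le_of_lt_succ (mem_range.1 hm))]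
  push_cast
  ring

/-- The exponential generating function `x ^ 2 / (1 - x)` of the linear orders on sets of at least
two elements. -/
noncomputable def blockSeries : PowerSeries ℤ := PowerSeries.X ^ 2 * PowerSeries.mk 1

theorem coeff_blockSeries (m : ℕ) : PowerSeries.coeff m blockSeries = if 2 ≤ m then 1 else 0 := by
  rw [blockSeries, PowerSeries.coeff_X_pow_mul', PowerSeries.coeff_mk, Pi.one_apply]

theorem factorial_mul_card_admissiblePartitions (U : Finset α) (k : ℕ) :
    (k.factorial * #(admissiblePartitions U k) : ℤ) =
      (#U).factorial * PowerSeries.coeff #U (blockSeries ^ k) := by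
  induction k generalizing U with
  | zero =>
    rw [card_admissiblePartitions_zero, pow_zero, PowerSeries.coeff_one]
    split_ifs with hU <;> simp [hU]
  | succ k ih =>
    calc ((k + 1).factorial * #(admissiblePartitions U (k + 1)) : ℤ)
        = k.factorial * ((k + 1) * #(admissiblePartitions U (k + 1)) : ℕ) := by
          rw [Nat.factorial_succ]
          push_cast
          ring
      _ = ∑ V ∈ U.powerset, ((#V).factorial * PowerSeries.coeff #V blockSeries) *
            ((#(U \ V)).factorial * PowerSeries.coeff #(U \ V) (blockSeries ^ k)) := by
          rw [succ_mul_card_admissiblePartitions, sum_filter, Nat.cast_sum, mul_sum]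
          refine sum_congr rfl fun V _ => ?_
          rw [coeff_blockSeries, ← ih]
          split_ifs
          · push_cast
            ring
          · simp
      _ = (#U).factorial * PowerSeries.coeff #U (blockSeries ^ (k + 1)) := by
          rw [sum_powerset_factorial_mul_coeff, pow_succ']

theorem coeff_blockSeries_pow_succ (k s : ℕ) :
    PowerSeries.coeff (s + k + 2) (blockSeries ^ (k + 1)) = s.choose k := by
  rw [blockSeries, mul_pow, ← pow_mul, PowerSeries.mk_one_pow_eq_mk_choose_add,
    PowerSeries.coeff_X_pow_mul', PowerSeries.coeff_mk]
  split_ifs with h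
  · rw [show k + (s + k + 2 - 2 * (k + 1)) = s by omega]
  · rw [Nat.choose_eq_zero_of_lt (by omega), Nat.cast_zero]

theorem succ_factorial_mul_card_admissiblePartitions {U : Finset α} {s k : ℕ}
    (hU : #U = s + k + 2) :
    (k + 1).factorial * #(admissiblePartitions U (k + 1)) = (s + k + 2).factorial * s.choose k := by
  have := factorial_mul_card_admissiblePartitions U (k + 1)
  rw [hU, coeff_blockSeries_pow_succ] at this
  exact_mod_cast this

end AdmissiblePartitions

theorem succ_mul_card_intNestedFamilies (s k : ℕ) :
    (k + 1) * #(intNestedFamilies (s + 2) (k + 1)) = (s + 2 + k).choose k * s.choose k := by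
  have := succ_mul_forestCount k 1 s
  rw [card_intNestedFamilies]
  rwa [Nat.add_comm 1 s, one_mul] at this

theorem factorial_mul_card_intNestedFamilies (s k : ℕ) :
    (s + 2).factorial * #(intNestedFamilies (s + 2) (k + 1)) =
      #(admissiblePartitions (Icc 1 (s + k + 2)) (k + 1)) := by
  have hchoose := Nat.choose_mul_factorial_mul_factorial (Nat.le_add_left k (s + 2))
  rw [Nat.add_sub_cancel] at hchoose
  refine Nat.eq_of_mul_eq_mul_left (k + 1).factorial_pos ?_
  calc (k + 1).factorial * ((s + 2).factorial * #(intNestedFamilies (s + 2) (k + 1)))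
      = k.factorial * (s + 2).factorial * ((k + 1) * #(intNestedFamilies (s + 2) (k + 1))) := by
        rw [Nat.factorial_succ]
        ring
    _ = (s + 2 + k).choose k * k.factorial * (s + 2).factorial * s.choose k := by
        rw [succ_mul_card_intNestedFamilies]
        ring
    _ = (s + k + 2).factorial * s.choose k := by
        rw [hchoose, Nat.add_right_comm]
    _ = (k + 1).factorial * #(admissiblePartitions (Icc 1 (s + k + 2)) (k + 1)) := by
        rw [succ_factorial_mul_card_admissiblePartitions (Nat.card_Icc _ _)]

end

/-- `OS₂((1,...,n),k)`, the disjoint union over all permutations `σ` of `{1,...,n}`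
of the parenthesizations with `k` couples of parentheses of the permuted list, is
in bijection with the admissible internally ordered `k`-partitions of `{1,...,n+k-1}`. -/
theorem stmt7 (n k : ℕ) (hn : 2 ≤ n) (hk1 : 1 ≤ k) (hk : k ≤ n - 1) :
    Nonempty ({p : Equiv.Perm (Fin n) × Finset (Finset ℕ) // IsIntNested n k p.2} ≃
      {P : Finset (List ℕ) // IsIOPart (n + k - 1) k P}) := by
  obtain ⟨s, rfl⟩ := Nat.exists_eq_add_of_le' hn
  obtain ⟨j, rfl⟩ := Nat.exists_eq_add_of_le' hk1
  have hcard : (Finset.univ ×ˢ intNestedFamilies (s + 2) (j + 1) :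
      Finset (Equiv.Perm (Fin (s + 2)) × Finset (Finset ℕ))).card =
      (admissiblePartitions (Finset.Icc 1 (s + 2 + (j + 1) - 1)) (j + 1)).card := by
    rw [Finset.card_product, Finset.card_univ, Fintype.card_perm, Fintype.card_fin,
      factorial_mul_card_intNestedFamilies, ← Nat.add_assoc, Nat.add_sub_cancel, Nat.add_right_comm]
  refine ⟨(Equiv.subtypeEquivRight fun p => ?_).trans <| (Finset.equivOfCardEq hcard).trans <|
    Equiv.subtypeEquivRight fun P => ?_⟩
  · rw [Finset.mem_product, mem_intNestedFamilies hn, and_iff_right (Finset.mem_univ _)]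
  · rw [mem_admissiblePartitions, isIOPart_iff]
end

section
/- For integers n ≥ 2 and 1 ≤ k ≤ n-1, the number of families of k intervals of {1,...,n}, each of cardinality ≥ 2, containing the full interval {1,...,n}, and such that any two intervals in the family are nested or disjoint, equals (1/k) · C(n-2, k-1) · C(n+k-1, k-1). -/
/-!
The interval `{a + 1, ..., b}` is the chord from `a` to `b` of a convex polygon with vertices
`0, ..., n`; nested or disjoint intervals are noncrossing chords. Call a vertex exposed if no chord
passes over it. Among the noncrossing families of `k` chords, let `A n k m` count those with exactly
`m` exposed vertices below `n`, and `B n k m` those with more than `m`. A family without a chord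
ending at `n + 1` lives on `0, ..., n`, with one exposed vertex fewer. Otherwise, removing the
longest chord ending at `n + 1` leaves a family with more exposed vertices, from which the chord is
recovered by joining the `(m + 1)`-st exposed vertex to `n + 1`. Hence
`A (n + 1) (k + 1) (m + 1) = A n (k + 1) m + B (n + 1) k (m + 1)`, and with
`B n k m = A n k (m + 1) + B n k (m + 1)` this determines both counts by induction on `k`:
`n! (k + 1)! A n (k + 1) m = m (n + k)! C(n - m - 1, k)`. Families containing the chord from `0` to
`n` are those whose only exposed vertex below `n` is `0`, so the answer is `A n k 1`.
-/

namespace NoncrossingChords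

open Finset

section Chords

/-- The chords of a convex polygon with vertices `0, ..., n`, as pairs `(a, b)` with `a < b`. Sides
`(a, a + 1)` are excluded, whereas `(0, n)` is allowed: it encodes the full interval. -/
def chords (n : ℕ) : Finset (ℕ × ℕ) :=
  {p ∈ range (n + 1) ×ˢ range (n + 1) | p.1 + 1 < p.2}

/-- No two chords of `S` cross. -/
def IsNoncrossing (S : Finset (ℕ × ℕ)) : Prop :=
  ∀ p ∈ S, ∀ q ∈ S, ¬ (p.1 < q.1 ∧ q.1 < p.2 ∧ p.2 < q.2)

/-- No chord of `S` passes over the vertex `i`. The exposed vertices below `n` are the left ends of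
the blocks into which the maximal intervals and the uncovered points partition `{1, ..., n}`. -/
def Exposed (S : Finset (ℕ × ℕ)) (i : ℕ) : Prop :=
  ∀ p ∈ S, ¬ (p.1 < i ∧ i < p.2)

instance : DecidablePred IsNoncrossing := fun S => by
  unfold IsNoncrossing
  infer_instance

instance (S : Finset (ℕ × ℕ)) : DecidablePred (Exposed S) := fun i => by
  unfold Exposed
  infer_instance

variable {n i : ℕ} {S T : Finset (ℕ × ℕ)}

lemma mem_chords {p : ℕ × ℕ} : p ∈ chords n ↔ p.1 + 1 < p.2 ∧ p.2 ≤ n := by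
  simp only [chords, mem_filter, mem_product, mem_range]
  omega

lemma subset_chords_iff_subset_chords_succ :
    S ⊆ chords n ↔ S ⊆ chords (n + 1) ∧ ¬ ∃ p ∈ S, p.2 = n + 1 := by
  simp only [subset_iff, mem_chords]
  grind

lemma IsNoncrossing.mono (hT : IsNoncrossing T) (hST : S ⊆ T) : IsNoncrossing S :=
  fun p hp q hq => hT p (hST hp) q (hST hq)

lemma Exposed.mono (hT : Exposed T i) (hST : S ⊆ T) : Exposed S i :=
  fun p hp => hT p (hST hp)

lemma IsNoncrossing.insert (hnc : IsNoncrossing S) (hS : S ⊆ chords n) (hi : Exposed S i) :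
    IsNoncrossing (insert (i, n) S) := by
  intro p hp q hq hcross
  rcases mem_insert.1 hp with rfl | hp <;> rcases mem_insert.1 hq with rfl | hq
  · omega
  · have := mem_chords.1 (hS hq)
    omega
  · exact hi p hp ⟨hcross.1, hcross.2.1⟩
  · exact hnc p hp q hq hcross

lemma exposed_insert_iff {j : ℕ} :
    Exposed (insert (i, n) S) j ↔ ¬ (i < j ∧ j < n) ∧ Exposed S j := by
  simp only [Exposed, mem_insert, forall_eq_or_imp]

lemma exposed_zero : Exposed S 0 := fun _ _ h => absurd h.1 (Nat.not_lt_zero _)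

lemma exposed_of_le (hS : S ⊆ chords n) (hi : n ≤ i) : Exposed S i := fun p hp h => by
  have := mem_chords.1 (hS hp)
  omega

lemma infinite_exposed (hS : S ⊆ chords n) : (Set.ofPred (Exposed S)).Infinite :=
  Set.infinite_of_forall_exists_gt fun a =>
    ⟨a + n + 1, exposed_of_le hS (by omega), by omega⟩

lemma exists_last_exposed (hn : 0 < n) (hS : S ⊆ chords n) (hnc : IsNoncrossing S) :
    ∃ i < n, Exposed S i ∧ ((i, n) ∈ S ∨ i + 1 = n) := by
  by_cases hend : ∃ a, (a, n) ∈ S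
  · -- The longest chord ending at `n` starts at an exposed vertex.
    have hmem := Nat.find_spec hend
    have hlt := mem_chords.1 (hS hmem)
    refine ⟨Nat.find hend, by omega, ?_, Or.inl hmem⟩
    rintro ⟨c, d⟩ hcd hover
    have hd := mem_chords.1 (hS hcd)
    obtain rfl | hdn := eq_or_ne d n
    · exact Nat.find_min hend hover.1 hcd
    · exact hnc _ hcd _ hmem (by simp only at hd hover ⊢; omega)
  · refine ⟨n - 1, by omega, ?_, Or.inr (by omega)⟩
    rintro ⟨c, d⟩ hcd hover
    have hd := mem_chords.1 (hS hcd)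
    obtain rfl : d = n := by simp only at hd hover; omega
    exact hend ⟨c, hcd⟩

lemma exists_mem_exposed (hS : S ⊆ chords n) (hnc : IsNoncrossing S) (hend : ∃ p ∈ S, p.2 = n) :
    ∃ i, (i, n) ∈ S ∧ Exposed S i := by
  obtain ⟨p, hp, rfl⟩ := hend
  have hlt := mem_chords.1 (hS hp)
  obtain ⟨i, -, hexp, hi | hi⟩ := exists_last_exposed (by omega) hS hnc
  · exact ⟨i, hi, hexp⟩
  · exact absurd (by omega) (hexp p hp)

end Chords

section Counting

variable {n m i : ℕ} {S : Finset (ℕ × ℕ)}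

lemma count_exposed_insert (hi : i < n) :
    Nat.count (Exposed (insert (i, n) S)) n = Nat.count (Exposed S) (i + 1) := by
  rw [Nat.count_eq_card_filter_range, Nat.count_eq_card_filter_range]
  congr 1
  ext j
  simp only [mem_filter, mem_range, exposed_insert_iff, ← and_assoc, and_congr_left_iff]
  omega

lemma count_exposed_eq_succ (hi : i < n) (hmem : (i, n) ∈ S) (hexp : Exposed S i) :
    Nat.count (Exposed S) n = Nat.count (Exposed S) i + 1 := by
  have h := count_exposed_insert (S := S) hi
  rwa [insert_eq_of_mem hmem, Nat.count_succ_eq_succ_count_iff.2 hexp] at h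

lemma nth_exposed_insert (hi : i < n) (hexp : Exposed S i) :
    Nat.nth (Exposed (insert (i, n) S)) (Nat.count (Exposed S) i) = i := by
  have hexp' : Exposed (insert (i, n) S) i := exposed_insert_iff.2 ⟨by omega, hexp⟩
  have hcount : Nat.count (Exposed S) i = Nat.count (Exposed (insert (i, n) S)) i := by
    have h := count_exposed_eq_succ hi (mem_insert_self _ S) hexp'
    rw [count_exposed_insert hi, Nat.count_succ_eq_succ_count_iff.2 hexp] at h
    omega
  rw [hcount, Nat.nth_count hexp']

lemma count_exposed_lt_of_nonempty (hS : S ⊆ chords n) (hne : S.Nonempty) :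
    Nat.count (Exposed S) n < n := by
  obtain ⟨p, hp⟩ := hne
  have hchord := mem_chords.1 (hS hp)
  refine lt_of_le_of_ne (Nat.count_le _) fun h => ?_
  exact Nat.count_iff_forall.1 h (p.1 + 1) (by omega) p hp (by omega)

lemma full_chord_mem_iff_count_exposed_eq_one (hn : 2 ≤ n) (hS : S ⊆ chords n)
    (hnc : IsNoncrossing S) :
    (0, n) ∈ S ↔ Nat.count (Exposed S) n = 1 := by
  constructor
  · intro h
    rw [count_exposed_eq_succ (by omega) h exposed_zero, Nat.count_zero]
  · intro h
    obtain ⟨i, hi, hexp, hlast⟩ := exists_last_exposed (by omega) hS hnc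
    have hi0 : i = 0 := by
      have := Nat.count_strict_mono hexp hi
      by_contra hpos
      have := Nat.count_strict_mono (exposed_zero (S := S)) (Nat.pos_of_ne_zero hpos)
      omega
    subst hi0
    exact hlast.resolve_right (by omega)

lemma count_exposed_lt_count_exposed_erase (hS : S ⊆ chords n) (hnc : IsNoncrossing S)
    (hmem : (i, n) ∈ S) (hexp : Exposed S i) :
    Nat.count (Exposed S) n < Nat.count (Exposed (S.erase (i, n))) n := by
  have hin := mem_chords.1 (hS hmem)
  obtain ⟨j, hjn, hj, hlast⟩ := exists_last_exposed (by omega)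
    ((erase_subset _ _).trans hS) (hnc.mono (erase_subset (i, n) S))
  have hij : i < j := by
    rcases hlast with hjS | rfl
    · obtain ⟨hne, hjS⟩ := mem_erase.1 hjS
      have hle : ¬ j < i := fun h => hexp _ hjS ⟨h, by omega⟩
      have : j ≠ i := fun h => hne (h ▸ rfl)
      omega
    · omega
  calc Nat.count (Exposed S) n
      = Nat.count (Exposed (S.erase (i, n))) (i + 1) := by
        rw [← count_exposed_insert (n := n) (by omega), insert_erase hmem]
    _ ≤ Nat.count (Exposed (S.erase (i, n))) j := Nat.count_monotone _ hij
    _ < Nat.count (Exposed (S.erase (i, n))) n := Nat.count_strict_mono hj hjn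

end Counting

section Recursion

/-- The noncrossing families of `k` chords of the polygon with vertices `0, ..., n`. -/
def noncrossingFamilies (n k : ℕ) : Finset (Finset (ℕ × ℕ)) :=
  {S ∈ powersetCard k (chords n) | IsNoncrossing S}

/-- The number `A n k m` of noncrossing families of `k` chords with exactly `m` exposed vertices
below `n`. -/
def numExposedEq (n k m : ℕ) : ℕ :=
  #{S ∈ noncrossingFamilies n k | Nat.count (Exposed S) n = m}

/-- The number `B n k m` of noncrossing families of `k` chords with more than `m` exposed vertices
below `n`. -/
def numExposedGt (n k m : ℕ) : ℕ :=
  #{S ∈ noncrossingFamilies n k | m < Nat.count (Exposed S) n}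

variable {n k m i : ℕ} {S : Finset (ℕ × ℕ)}

lemma mem_noncrossingFamilies :
    S ∈ noncrossingFamilies n k ↔ (S ⊆ chords n ∧ #S = k) ∧ IsNoncrossing S := by
  rw [noncrossingFamilies, mem_filter, mem_powersetCard]

lemma numExposedGt_eq_add (n k m : ℕ) :
    numExposedGt n k m = numExposedEq n k (m + 1) + numExposedGt n k (m + 1) := by
  rw [numExposedGt,
    ← card_filter_add_card_filter_not (fun S => Nat.count (Exposed S) n = m + 1),
    filter_filter, filter_filter, numExposedEq, numExposedGt]
  congr 3 <;> ext S <;> omega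

lemma numExposedEq_zero_exposed (hn : 0 < n) : numExposedEq n k 0 = 0 := by
  rw [numExposedEq, card_eq_zero, filter_eq_empty_iff]
  intro S _ h
  exact Nat.count_iff_forall_not.1 h 0 hn exposed_zero

lemma numExposedGt_succ_of_le (h : n ≤ m + 1) : numExposedGt n (k + 1) m = 0 := by
  rw [numExposedGt, card_eq_zero, filter_eq_empty_iff]
  intro S hS hm
  obtain ⟨⟨hchords, hcard⟩, -⟩ := mem_noncrossingFamilies.1 hS
  have := count_exposed_lt_of_nonempty hchords (card_pos.1 (by omega))
  omega

lemma numExposedGt_zero_chords (h : m < n) : numExposedGt n 0 m = 1 := by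
  have hfam : noncrossingFamilies n 0 = {∅} := by
    rw [noncrossingFamilies, powersetCard_zero, filter_true_of_mem]
    simp [IsNoncrossing]
  have hcount : Nat.count (Exposed ∅) n = n := Nat.count_of_forall (by simp [Exposed])
  rw [numExposedGt, hfam, filter_true_of_mem (by simpa [hcount] using h), card_singleton]

lemma card_filter_not_exists_chord_to_last (n k m : ℕ) :
    #{S ∈ noncrossingFamilies (n + 1) k |
        Nat.count (Exposed S) (n + 1) = m + 1 ∧ ¬ ∃ p ∈ S, p.2 = n + 1} =
      numExposedEq n k m := by
  rw [numExposedEq]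
  congr 1
  ext S
  have hchords := subset_chords_iff_subset_chords_succ (n := n) (S := S)
  have hcount (hS : S ⊆ chords n) :
      Nat.count (Exposed S) (n + 1) = Nat.count (Exposed S) n + 1 :=
    Nat.count_succ_eq_succ_count_iff.2 (exposed_of_le hS le_rfl)
  simp only [mem_filter, mem_noncrossingFamilies]
  constructor
  · rintro ⟨⟨⟨hS, hcard⟩, hnc⟩, hm, hend⟩
    have hS := hchords.2 ⟨hS, hend⟩
    exact ⟨⟨⟨hS, hcard⟩, hnc⟩, by rw [hcount hS] at hm; omega⟩
  · rintro ⟨⟨⟨hS, hcard⟩, hnc⟩, rfl⟩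
    exact ⟨⟨⟨(hchords.1 hS).1, hcard⟩, hnc⟩, hcount hS, (hchords.1 hS).2⟩

lemma insert_mem_noncrossingFamilies (hS : S ∈ noncrossingFamilies n k) (hexp : Exposed S i)
    (hin : i + 1 < n) (hnotMem : (i, n) ∉ S) :
    insert (i, n) S ∈ noncrossingFamilies n (k + 1) := by
  obtain ⟨⟨hchords, hcard⟩, hnc⟩ := mem_noncrossingFamilies.1 hS
  exact mem_noncrossingFamilies.2
    ⟨⟨insert_subset (mem_chords.2 ⟨hin, le_rfl⟩) hchords, by
      rw [card_insert_of_notMem hnotMem, hcard]⟩, hnc.insert hchords hexp⟩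

lemma erase_mem_noncrossingFamilies {p : ℕ × ℕ} (hS : S ∈ noncrossingFamilies n (k + 1))
    (hp : p ∈ S) : S.erase p ∈ noncrossingFamilies n k := by
  obtain ⟨⟨hchords, hcard⟩, hnc⟩ := mem_noncrossingFamilies.1 hS
  exact mem_noncrossingFamilies.2
    ⟨⟨(erase_subset _ _).trans hchords, by rw [card_erase_of_mem hp, hcard, Nat.add_sub_cancel]⟩,
      hnc.mono (erase_subset _ _)⟩

lemma nth_exposed_of_lt_count (hS : S ∈ noncrossingFamilies n k)
    (hm : m + 1 < Nat.count (Exposed S) n) :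
    ∃ i, Nat.nth (Exposed S) m = i ∧ Exposed S i ∧ Nat.count (Exposed S) i = m ∧ i + 1 < n ∧
      (i, n) ∉ S := by
  have hinf := infinite_exposed (mem_noncrossingFamilies.1 hS).1.1
  have hlt : Nat.nth (Exposed S) m < Nat.nth (Exposed S) (m + 1) :=
    (Nat.nth_lt_nth hinf).2 m.lt_succ_self
  have hltn : Nat.nth (Exposed S) (m + 1) < n := Nat.nth_lt_of_lt_count hm
  exact ⟨_, rfl, Nat.nth_mem_of_infinite hinf m, Nat.count_nth_of_infinite hinf m, by omega,
    fun h => Nat.nth_mem_of_infinite hinf (m + 1) _ h ⟨hlt, hltn⟩⟩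

lemma nth_exposed_of_exists_chord (hS : S ∈ noncrossingFamilies n k)
    (hm : Nat.count (Exposed S) n = m + 1) (hend : ∃ p ∈ S, p.2 = n) :
    ∃ i < n, Nat.nth (Exposed S) m = i ∧ Exposed S i ∧ (i, n) ∈ S := by
  obtain ⟨⟨hchords, -⟩, hnc⟩ := mem_noncrossingFamilies.1 hS
  obtain ⟨i, hmem, hexp⟩ := exists_mem_exposed hchords hnc hend
  have hin := mem_chords.1 (hchords hmem)
  have hcount := count_exposed_eq_succ (by omega) hmem hexp
  obtain rfl : Nat.count (Exposed S) i = m := by omega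
  exact ⟨i, by omega, Nat.nth_count hexp, hexp, hmem⟩

lemma card_filter_exists_chord_to_last (n k m : ℕ) :
    #{S ∈ noncrossingFamilies n (k + 1) |
        Nat.count (Exposed S) n = m + 1 ∧ ∃ p ∈ S, p.2 = n} =
      numExposedGt n k (m + 1) := by
  symm
  refine card_nbij' (fun S => insert (Nat.nth (Exposed S) m, n) S)
    (fun S => S.erase (Nat.nth (Exposed S) m, n)) ?_ ?_ ?_ ?_
  all_goals
    intro S hS
    simp only [coe_filter, Set.mem_ofPred_eq] at hS ⊢
  · obtain ⟨i, hi, hexp, rfl, hin, hnotMem⟩ := nth_exposed_of_lt_count hS.1 hS.2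
    rw [hi, count_exposed_insert (by omega), Nat.count_succ_eq_succ_count_iff.2 hexp]
    exact ⟨insert_mem_noncrossingFamilies hS.1 hexp hin hnotMem, rfl, _, mem_insert_self _ _, rfl⟩
  · obtain ⟨i, -, hi, hexp, hmem⟩ := nth_exposed_of_exists_chord hS.1 hS.2.1 hS.2.2
    obtain ⟨⟨hchords, -⟩, hnc⟩ := mem_noncrossingFamilies.1 hS.1
    rw [hi, ← hS.2.1]
    exact ⟨erase_mem_noncrossingFamilies hS.1 hmem,
      count_exposed_lt_count_exposed_erase hchords hnc hmem hexp⟩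
  · obtain ⟨i, hi, hexp, rfl, hin, hnotMem⟩ := nth_exposed_of_lt_count hS.1 hS.2
    rw [hi, nth_exposed_insert (by omega) hexp, erase_insert hnotMem]
  · obtain ⟨i, hin, hi, hexp, hmem⟩ := nth_exposed_of_exists_chord hS.1 hS.2.1 hS.2.2
    have hexp' : Exposed (S.erase (i, n)) i := hexp.mono (erase_subset _ _)
    obtain rfl : Nat.count (Exposed (S.erase (i, n))) i = m := by
      have hcount := count_exposed_insert (S := S.erase (i, n)) hin
      rw [insert_erase hmem, hS.2.1, Nat.count_succ_eq_succ_count_iff.2 hexp'] at hcount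
      omega
    rw [hi, Nat.nth_count hexp', insert_erase hmem]

lemma numExposedEq_succ (n k m : ℕ) :
    numExposedEq (n + 1) (k + 1) (m + 1) =
      numExposedEq n (k + 1) m + numExposedGt (n + 1) k (m + 1) := by
  rw [← card_filter_not_exists_chord_to_last n, ← card_filter_exists_chord_to_last (n + 1),
    numExposedEq, ← card_filter_add_card_filter_not (fun S => ∃ p ∈ S, p.2 = n + 1), filter_filter,
    filter_filter, add_comm]

end Recursion

section ClosedForm

open scoped Nat

lemma mul_choose_add_mul_choose_succ (k m e : ℕ) :
    (k + 2) * (m + 1) * e.choose k + ((k + 1) * (m + 1) + (m + e + 2)) * e.choose (k + 1) =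
      ((k + 1) * m + (m + e + 2)) * (e + 1).choose (k + 1) := by
  have h := Nat.add_one_mul_choose_eq e k
  rw [Nat.choose_succ_succ'] at h ⊢
  linear_combination h.symm

/- Here `n = m + e + 1`: this avoids the truncated `n - m - 1`, and the recursion for `A` becomes an
induction on `m` with `e` fixed, the one for `B` an induction on `e` with `n` fixed. -/

lemma numExposedEq_mul_factorial_of_numExposedGt {k e : ℕ}
    (hGt : ∀ m, numExposedGt (m + e + 1) k m * ((m + e + 1)! * (k + 1)!) =
      (m + e + k)! * (k * m + (m + e + 1)) * e.choose k) (m : ℕ) :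
    numExposedEq (m + e + 1) (k + 1) m * ((m + e + 1)! * (k + 1)!) =
      m * (m + e + k + 1)! * e.choose k := by
  induction m with
  | zero => rw [numExposedEq_zero_exposed (by omega), zero_mul, zero_mul, zero_mul]
  | succ m ih =>
    have hrec := numExposedEq_succ (m + e + 1) k m
    have hm := hGt (m + 1)
    rw [show m + 1 + e + 1 = m + e + 1 + 1 by ring, show m + 1 + e + k = m + e + k + 1 by ring]
      at hm ⊢
    rw [hrec, Nat.factorial_succ (m + e + k + 1), add_mul, hm, Nat.factorial_succ (m + e + 1)]
    linear_combination (m + e + 2) * ih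

lemma numExposedGt_mul_factorial_of_numExposedEq {k : ℕ}
    (hEq : ∀ e m, numExposedEq (m + e + 1) (k + 1) m * ((m + e + 1)! * (k + 1)!) =
      m * (m + e + k + 1)! * e.choose k) (e m : ℕ) :
    numExposedGt (m + e + 1) (k + 1) m * ((m + e + 1)! * (k + 2)!) =
      (m + e + k + 1)! * ((k + 1) * m + (m + e + 1)) * e.choose (k + 1) := by
  induction e generalizing m with
  | zero => rw [numExposedGt_succ_of_le (by omega), Nat.choose_zero_succ, zero_mul, mul_zero]
  | succ e ih =>
    have hGt := ih (m + 1)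
    have hEq := hEq e (m + 1)
    rw [show m + 1 + e + 1 = m + (e + 1) + 1 by ring,
      show m + 1 + e + k + 1 = m + (e + 1) + k + 1 by ring] at hGt hEq
    rw [numExposedGt_eq_add, add_mul, hGt, Nat.factorial_succ (k + 1)]
    linear_combination (k + 2) * hEq +
      (m + (e + 1) + k + 1)! * mul_choose_add_mul_choose_succ k m e

theorem numExposedEq_mul_factorial (k e m : ℕ) :
    numExposedEq (m + e + 1) (k + 1) m * ((m + e + 1)! * (k + 1)!) =
      m * (m + e + k + 1)! * e.choose k := by
  induction k generalizing e m with
  | zero =>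
    refine numExposedEq_mul_factorial_of_numExposedGt (fun m => ?_) m
    rw [numExposedGt_zero_chords (by omega), Nat.factorial_succ (m + e)]
    simp [mul_comm]
  | succ k ih =>
    exact numExposedEq_mul_factorial_of_numExposedGt
      (fun m => numExposedGt_mul_factorial_of_numExposedEq ih e m) m

end ClosedForm

section Intervals

variable {n k : ℕ} {S : Finset (ℕ × ℕ)} {p q : ℕ × ℕ}

/-- The interval `{a + 1, ..., b}` encoded by the chord `(a, b)`. -/
def toInterval (p : ℕ × ℕ) : Finset ℕ := Ioc p.1 p.2

lemma toInterval_subset_iff (hp : p.1 < p.2) :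
    toInterval p ⊆ toInterval q ↔ p.2 ≤ q.2 ∧ q.1 ≤ p.1 := by
  rw [toInterval, toInterval, ← coe_subset, coe_Ioc, coe_Ioc, Set.Ioc_subset_Ioc_iff hp]

lemma injOn_toInterval (n : ℕ) : Set.InjOn toInterval (chords n) := by
  intro p hp q hq h
  have hp := mem_chords.1 hp
  have hq := mem_chords.1 hq
  have hpq := (toInterval_subset_iff (by omega)).1 h.subset
  have hqp := (toInterval_subset_iff (by omega)).1 h.superset
  exact Prod.ext (by omega) (by omega)

lemma toInterval_nested_or_disjoint_iff (hp : p.1 < p.2) (hq : q.1 < q.2) :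
    (toInterval p ⊆ toInterval q ∨ toInterval q ⊆ toInterval p ∨
        Disjoint (toInterval p) (toInterval q)) ↔
      ¬ (p.1 < q.1 ∧ q.1 < p.2 ∧ p.2 < q.2) ∧ ¬ (q.1 < p.1 ∧ p.1 < q.2 ∧ q.2 < p.2) := by
  rw [toInterval_subset_iff hp, toInterval_subset_iff hq, toInterval, toInterval,
    Ioc_disjoint_Ioc]
  omega

lemma mem_image_toInterval_chords {A : Finset ℕ} :
    A ∈ (chords n).image toInterval ↔
      2 ≤ #A ∧ ∃ i j, 1 ≤ i ∧ i ≤ j ∧ j ≤ n ∧ A = Icc i j := by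
  simp only [mem_image, mem_chords]
  constructor
  · rintro ⟨⟨a, b⟩, hab, rfl⟩
    simp only at hab
    refine ⟨by rw [toInterval, Nat.card_Ioc]; simp only; omega,
      a + 1, b, by omega, by omega, hab.2, (Icc_add_one_left_eq_Ioc a b).symm⟩
  · rintro ⟨hcard, i, j, hi, hij, hj, rfl⟩
    rw [Nat.card_Icc] at hcard
    refine ⟨(i - 1, j), by simp only; omega, ?_⟩
    rw [toInterval, ← Icc_add_one_left_eq_Ioc, Nat.sub_add_cancel hi]

lemma isIntNested_image_toInterval_iff (hn : 2 ≤ n) (hS : S ⊆ chords n) :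
    IsIntNested n k (S.image toInterval) ↔ #S = k ∧ (0, n) ∈ S ∧ IsNoncrossing S := by
  have hlt {p} (hp : p ∈ S) : p.1 < p.2 := by
    have := mem_chords.1 (hS hp)
    omega
  have hfull : Icc 1 n ∈ S.image toInterval ↔ (0, n) ∈ S := by
    rw [show Icc 1 n = toInterval (0, n) from Icc_add_one_left_eq_Ioc 0 n, ← mem_coe, coe_image]
    exact (injOn_toInterval n).mem_image_iff hS (mem_chords.2 ⟨hn, le_rfl⟩)
  have hinterval : ∀ A ∈ S.image toInterval,
      2 ≤ #A ∧ ∃ i j, 1 ≤ i ∧ i ≤ j ∧ j ≤ n ∧ A = Icc i j := fun A hA =>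
    mem_image_toInterval_chords.1 (image_subset_image hS hA)
  have hnested : (∀ A ∈ S.image toInterval, ∀ B ∈ S.image toInterval,
      A ⊆ B ∨ B ⊆ A ∨ Disjoint A B) ↔ IsNoncrossing S := by
    simp only [forall_mem_image]
    exact ⟨fun h p hp q hq => ((toInterval_nested_or_disjoint_iff (hlt hp) (hlt hq)).1
        (h hp hq)).1,
      fun h p hp q hq => (toInterval_nested_or_disjoint_iff (hlt hp) (hlt hq)).2
        ⟨h p hp q hq, h q hq p hp⟩⟩
  rw [IsIntNested, card_image_of_injOn ((injOn_toInterval n).mono hS), hfull, hnested,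
    and_iff_right hinterval]

lemma card_isIntNested (hn : 2 ≤ n) (k : ℕ) :
    Nat.card {S : Finset (Finset ℕ) // IsIntNested n k S} = numExposedEq n k 1 := by
  have hmem (S : Finset (ℕ × ℕ)) :
      S ∈ {S ∈ noncrossingFamilies n k | Nat.count (Exposed S) n = 1} ↔
        S ⊆ chords n ∧ IsIntNested n k (S.image toInterval) := by
    rw [mem_filter, mem_noncrossingFamilies, and_assoc, and_assoc, and_congr_right_iff]
    intro hS
    rw [isIntNested_image_toInterval_iff hn hS, and_congr_right_iff, and_comm]
    exact fun _ => and_congr_left fun hnc =>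
      (full_chord_mem_iff_count_exposed_eq_one hn hS hnc).symm
  have hinj := (image_injOn_powerset_of_injOn (injOn_toInterval n)).mono
    fun S hS => mem_coe.2 (mem_powerset.2 ((hmem S).1 hS).1)
  rw [numExposedEq, ← card_image_of_injOn hinj]
  refine Nat.subtype_card _ fun T => ?_
  simp only [mem_image, hmem]
  constructor
  · rintro ⟨S, ⟨-, hS⟩, rfl⟩
    exact hS
  · intro hT
    have hsub : T ⊆ (chords n).image toInterval := fun A hA =>
      mem_image_toInterval_chords.2 (hT.2.2.1 A hA)
    obtain ⟨S, hS, rfl⟩ := subset_image_iff.1 hsub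
    exact ⟨S, ⟨hS, hT⟩, rfl⟩

end Intervals

end NoncrossingChords

/-- The number of such families is `(1/k) · C(n-2,k-1) · C(n+k-1,k-1)`
(stated multiplicatively), the Kirkman–Cayley number `D_{n+1,k-1}`. -/
theorem stmt9 (n k : ℕ) (hn : 2 ≤ n) (hk1 : 1 ≤ k) (hk : k ≤ n - 1) :
    k * Nat.card {S : Finset (Finset ℕ) // IsIntNested n k S} =
      (n - 2).choose (k - 1) * (n + k - 1).choose (k - 1) := by
  obtain ⟨e, rfl⟩ := Nat.exists_eq_add_of_le hn
  obtain ⟨j, rfl⟩ := Nat.exists_eq_add_of_le' hk1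
  rw [NoncrossingChords.card_isIntNested hn, Nat.add_sub_cancel_left, Nat.add_sub_cancel,
    show 2 + e + (j + 1) - 1 = 2 + e + j by omega]
  have hA := NoncrossingChords.numExposedEq_mul_factorial j e 1
  have hchoose := Nat.add_choose_mul_factorial_mul_factorial (2 + e) j
  rw [show 1 + e + 1 = 2 + e by ring, show 1 + e + j + 1 = 2 + e + j by ring, ← hchoose,
    Nat.factorial_succ j] at hA
  refine Nat.eq_of_mul_eq_mul_right
    (Nat.mul_pos (2 + e).factorial_pos j.factorial_pos) ?_
  linear_combination hA
end

section
/- For integers n ≥ 2 and 1 ≤ k ≤ n-1, the number of dissections of a convex polygon with n+1 labelled edges by k-1 pairwise noncrossing diagonals is D_{n+1,k-1} = (1/k) · C(n-2, k-1) · C(n+k-1, k-1) (Kirkman–Cayley formula). -/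
/-!
Dropping the requirement that the outermost bracket be present makes the count accessible to
induction: let `F(n, k, r)` be the number of systems of `k` brackets on `1, …, n` whose outermost
brackets cut the list into `r` blocks, so that a parenthesization is the case `r = 1`. If the last
block is the single item `n`, delete that item. Otherwise remove the longest bracket ending at `n`;
this splits the last block into at least two, and the bracket can be recovered from the number of
blocks it leaves in front. Hence
`F(n + 1, k + 1, r + 1) = F(n, k + 1, r) + ∑_{s ≥ r + 2} F(n + 1, k, s)`,
and for `k ≥ 1` and `r < n` this is solved by
`F(n, k, r) = (r / k) · C(n + k - 1, k - 1) · C(n - r - 1, k - 1)`.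
-/

open Finset

/-- Arrangements of pairwise noncrossing brackets on the list `1, …, n`, each enclosing at least
two items. The bracket enclosing `a, …, b` is encoded as the pair `(a, b)`; the outermost bracket
`(1, n)` is not required, so that the class is stable under removing brackets. -/
structure IsBracketing (n : ℕ) (B : Finset (ℕ × ℕ)) : Prop where
  bounds : ∀ p ∈ B, 1 ≤ p.1 ∧ p.1 < p.2 ∧ p.2 ≤ n
  laminar : ∀ p ∈ B, ∀ q ∈ B,
    (p.1 ≤ q.1 ∧ q.2 ≤ p.2) ∨ (q.1 ≤ p.1 ∧ p.2 ≤ q.2) ∨ p.2 < q.1 ∨ q.2 < p.1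

/-- The left ends of the blocks into which the outermost brackets cut `1, …, n`; an item that no
bracket encloses is a block by itself. Equivalently, the items that no bracket joins to their
predecessor. -/
def blockStarts (n : ℕ) (B : Finset (ℕ × ℕ)) : Finset ℕ :=
  {j ∈ Icc 1 n | ∀ p ∈ B, ¬(p.1 < j ∧ j ≤ p.2)}

section BlockStarts

variable {n a j : ℕ} {B C : Finset (ℕ × ℕ)}

lemma mem_blockStarts :
    j ∈ blockStarts n B ↔ (1 ≤ j ∧ j ≤ n) ∧ ∀ p ∈ B, ¬(p.1 < j ∧ j ≤ p.2) := by
  rw [blockStarts, mem_filter, mem_Icc]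

lemma card_blockStarts_empty (n : ℕ) : #(blockStarts n ∅) = n := by
  simp [blockStarts]

lemma card_blockStarts_le (n : ℕ) (B : Finset (ℕ × ℕ)) : #(blockStarts n B) ≤ n :=
  (card_le_card (filter_subset _ _)).trans_eq (Nat.card_Icc 1 n)

lemma blockStarts_insert_last (n a : ℕ) (B : Finset (ℕ × ℕ)) :
    blockStarts n (insert (a, n) B) = {j ∈ blockStarts n B | j ≤ a} := by
  ext j
  simp only [mem_blockStarts, mem_filter, forall_mem_insert]
  constructor
  · rintro ⟨hj, hja, hjB⟩
    exact ⟨⟨hj, hjB⟩, by omega⟩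
  · rintro ⟨⟨hj, hjB⟩, hja⟩
    exact ⟨hj, by omega, hjB⟩

lemma isBracketing_succ_and_last_mem_iff :
    IsBracketing (n + 1) B ∧ n + 1 ∈ blockStarts (n + 1) B ↔ IsBracketing n B := by
  constructor
  · rintro ⟨hB, hlast⟩
    refine ⟨fun p hp ↦ ?_, hB.laminar⟩
    have := hB.bounds p hp
    have := (mem_blockStarts.mp hlast).2 p hp
    omega
  · intro hB
    refine ⟨⟨fun p hp ↦ ?_, hB.laminar⟩, mem_blockStarts.mpr ⟨by omega, fun p hp ↦ ?_⟩⟩ <;>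
    · have := hB.bounds p hp
      omega

namespace IsBracketing

lemma mono (hB : IsBracketing n B) (h : C ⊆ B) : IsBracketing n C :=
  ⟨fun p hp ↦ hB.bounds p (h hp), fun p hp q hq ↦ hB.laminar p (h hp) q (h hq)⟩

lemma one_mem_blockStarts (hB : IsBracketing n B) (hn : 0 < n) : 1 ∈ blockStarts n B := by
  refine mem_blockStarts.mpr ⟨by omega, fun p hp ↦ ?_⟩
  have := hB.bounds p hp
  omega

lemma card_blockStarts_succ (hB : IsBracketing n B) :
    #(blockStarts (n + 1) B) = #(blockStarts n B) + 1 := by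
  have hlast := (isBracketing_succ_and_last_mem_iff.mpr hB).2
  have hinsert : blockStarts (n + 1) B = insert (n + 1) (blockStarts n B) := by
    ext j
    rw [mem_insert]
    by_cases hj : j = n + 1
    · simp only [hj, hlast, true_or]
    · simp only [mem_blockStarts, hj, false_or]
      exact and_congr_left fun _ ↦ by omega
  rw [hinsert, card_insert_of_notMem]
  rw [mem_blockStarts]
  omega

lemma card_blockStarts_lt (hB : IsBracketing n B) (hne : B.Nonempty) :
    #(blockStarts n B) < n := by
  obtain ⟨p, hp⟩ := hne
  have hbounds := hB.bounds p hp
  refine (card_blockStarts_le n B).lt_of_ne fun hcard ↦ ?_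
  have hfull : blockStarts n B = Icc 1 n :=
    eq_of_subset_of_card_le (filter_subset _ _) (by simp [hcard])
  have hmem : p.2 ∈ blockStarts n B := by
    rw [hfull, mem_Icc]
    omega
  exact (mem_blockStarts.mp hmem).2 p hp ⟨hbounds.2.1, le_rfl⟩

lemma insert_last (hB : IsBracketing n B) (ha : a ∈ blockStarts n B) (han : a < n) :
    IsBracketing n (insert (a, n) B) := by
  obtain ⟨⟨ha1, -⟩, hstart⟩ := mem_blockStarts.mp ha
  have hsplit : ∀ p ∈ B, (a ≤ p.1 ∧ p.2 ≤ n) ∨ p.2 < a := by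
    intro p hp
    have := hstart p hp
    have := hB.bounds p hp
    omega
  refine ⟨fun p hp ↦ ?_, fun p hp q hq ↦ ?_⟩
  · obtain rfl | hp := mem_insert.mp hp
    · exact ⟨ha1, han, le_rfl⟩
    · exact hB.bounds p hp
  · obtain rfl | hp := mem_insert.mp hp <;> obtain rfl | hq := mem_insert.mp hq
    · simp
    · have := hsplit q hq
      dsimp only
      omega
    · have := hsplit p hp
      dsimp only
      omega
    · exact hB.laminar p hp q hq

lemma exists_isGreatest_blockStarts (hB : IsBracketing n B) (hn : 0 < n)
    (hlast : n ∉ blockStarts n B) : ∃ a, (a, n) ∈ B ∧ IsGreatest (blockStarts n B : Set ℕ) a := by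
  classical
  have hex : ∃ a, (a, n) ∈ B := by
    rw [mem_blockStarts] at hlast
    push Not at hlast
    obtain ⟨⟨a, b⟩, hp, -, hnb⟩ := hlast ⟨hn, le_rfl⟩
    obtain rfl : b = n := le_antisymm (hB.bounds _ hp).2.2 hnb
    exact ⟨a, hp⟩
  obtain ⟨a, ha, hmin⟩ : ∃ a, (a, n) ∈ B ∧ ∀ c < a, (c, n) ∉ B :=
    ⟨Nat.find hex, Nat.find_spec hex, fun _ ↦ Nat.find_min hex⟩
  have hbounds := hB.bounds _ ha
  dsimp only at hbounds
  refine ⟨a, ha, mem_blockStarts.mpr ⟨by omega, ?_⟩, fun j hj ↦ ?_⟩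
  · rintro ⟨c, d⟩ hp ⟨hca, had⟩
    have hlam := hB.laminar _ hp _ ha
    have hle := (hB.bounds _ hp).2.2
    dsimp only at hlam hle hca had
    obtain rfl : d = n := by omega
    exact hmin c hca hp
  · have hj := mem_blockStarts.mp hj
    have := hj.2 _ ha
    dsimp only at this
    omega

lemma exists_eq_insert_last (hB : IsBracketing n B) (hn : 0 < n) (hlast : n ∉ blockStarts n B) :
    ∃ a C, IsBracketing n C ∧ (a, n) ∉ C ∧ B = insert (a, n) C ∧ a ∈ blockStarts n C ∧
      #{j ∈ blockStarts n C | j ≤ a} < #(blockStarts n C) := by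
  obtain ⟨a, haB, hgreatest⟩ := hB.exists_isGreatest_blockStarts hn hlast
  have hC : IsBracketing n (B.erase (a, n)) := hB.mono (erase_subset _ _)
  have hinsert : insert (a, n) (B.erase (a, n)) = B := insert_erase haB
  have ha : a ∈ blockStarts n (B.erase (a, n)) := by
    have := hgreatest.1
    rw [← hinsert, blockStarts_insert_last] at this
    exact (mem_filter.mp this).1
  refine ⟨a, B.erase (a, n), hC, notMem_erase _ _, hinsert.symm, ha, card_lt_card ?_⟩
  rw [filter_ssubset]
  by_contra! hmax
  have hlast' : n ∉ blockStarts n (B.erase (a, n)) := fun hmem ↦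
    (hB.bounds _ haB).2.1.not_ge (hmax n hmem)
  obtain ⟨b, hb, hgreatest'⟩ := hC.exists_isGreatest_blockStarts hn hlast'
  obtain rfl : b = a := hgreatest'.unique ⟨ha, hmax⟩
  exact notMem_erase _ _ hb

lemma card_blockStarts_eq_one_iff (hB : IsBracketing n B) (hn : 2 ≤ n) :
    #(blockStarts n B) = 1 ↔ (1, n) ∈ B := by
  have hone := hB.one_mem_blockStarts (by omega : 0 < n)
  constructor
  · intro hcard
    obtain ⟨c, hc⟩ := card_eq_one.mp hcard
    obtain rfl : 1 = c := mem_singleton.mp (hc ▸ hone)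
    have hlast : n ∉ blockStarts n B := by
      rw [hc, mem_singleton]
      omega
    obtain ⟨a, ha, hgreatest⟩ := hB.exists_isGreatest_blockStarts (by omega) hlast
    obtain rfl : a = 1 := by simpa [hc] using hgreatest.1
    exact ha
  · intro hmem
    refine card_eq_one.mpr ⟨1, eq_singleton_iff_unique_mem.mpr ⟨hone, fun j hj ↦ ?_⟩⟩
    have hj := mem_blockStarts.mp hj
    have := hj.2 _ hmem
    dsimp only at this
    omega

end IsBracketing

end BlockStarts

section Rank

variable {Q : Finset ℕ} {a r : ℕ}

lemma card_filter_le_eq_count_succ (Q : Finset ℕ) (a : ℕ) :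
    #{x ∈ Q | x ≤ a} = Nat.count (· ∈ Q) (a + 1) := by
  rw [Nat.count_eq_card_filter_range]
  congr 1
  ext x
  rw [mem_filter, mem_filter, mem_range, Nat.lt_succ_iff, and_comm]

lemma nth_mem_of_lt_card (hr : r < #Q) : Nat.nth (· ∈ Q) r ∈ Q :=
  Nat.nth_mem (p := (· ∈ Q)) r fun hf ↦ by
    convert hr
    ext
    simp

lemma card_filter_le_nth (hr : r < #Q) : #{x ∈ Q | x ≤ Nat.nth (· ∈ Q) r} = r + 1 := by
  rw [card_filter_le_eq_count_succ, Nat.count_succ, if_pos (nth_mem_of_lt_card hr), Nat.count_nth]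
  intro hf
  convert hr
  ext
  simp

lemma nth_eq_of_card_filter_le (ha : a ∈ Q) (h : #{x ∈ Q | x ≤ a} = r + 1) :
    Nat.nth (· ∈ Q) r = a := by
  rw [card_filter_le_eq_count_succ, Nat.count_succ, if_pos ha] at h
  rw [← Nat.succ_injective h]
  exact Nat.nth_count (p := (· ∈ Q)) ha

end Rank

section Recurrence

/-- The bracketings of `1, …, n` with `k` brackets. -/
noncomputable def bracketings (n k : ℕ) : Finset (Finset (ℕ × ℕ)) :=
  open Classical in {B ∈ powersetCard k (Icc 1 n ×ˢ Icc 1 n) | IsBracketing n B}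

/-- The number of bracketings of `1, …, n` with `k` brackets and `r` blocks, that is, of ordered
forests of `r` plane trees with `n` leaves and `k` inner vertices, each having at least two
children. -/
noncomputable def bracketingCount (n k r : ℕ) : ℕ :=
  #{B ∈ bracketings n k | #(blockStarts n B) = r}

variable {n k r : ℕ} {B : Finset (ℕ × ℕ)}

lemma mem_bracketings : B ∈ bracketings n k ↔ IsBracketing n B ∧ #B = k := by
  simp only [bracketings, mem_filter, mem_powersetCard]
  refine ⟨fun h ↦ ⟨h.2, h.1.2⟩, fun h ↦ ⟨⟨fun p hp ↦ ?_, h.2⟩, h.1⟩⟩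
  have := h.1.bounds p hp
  rw [mem_product, mem_Icc, mem_Icc]
  omega

/-- Encloses the blocks from number `r` (counting from `0`) to the last in a new bracket. -/
noncomputable def closeBlocks (n r : ℕ) (B : Finset (ℕ × ℕ)) : Finset (ℕ × ℕ) :=
  insert (Nat.nth (· ∈ blockStarts n B) r, n) B

lemma blockStarts_closeBlocks (n r : ℕ) (B : Finset (ℕ × ℕ)) :
    blockStarts n (closeBlocks n r B) =
      {j ∈ blockStarts n B | j ≤ Nat.nth (· ∈ blockStarts n B) r} :=
  blockStarts_insert_last n _ B

lemma card_blockStarts_closeBlocks (hr : r < #(blockStarts n B)) :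
    #(blockStarts n (closeBlocks n r B)) = r + 1 := by
  rw [blockStarts_closeBlocks, card_filter_le_nth hr]

lemma isGreatest_blockStarts_closeBlocks (hr : r < #(blockStarts n B)) :
    IsGreatest (blockStarts n (closeBlocks n r B) : Set ℕ) (Nat.nth (· ∈ blockStarts n B) r) := by
  rw [blockStarts_closeBlocks]
  exact ⟨mem_filter.mpr ⟨nth_mem_of_lt_card hr, le_rfl⟩, fun j hj ↦ (mem_filter.mp hj).2⟩

lemma nth_blockStarts_lt (hr : r + 1 < #(blockStarts n B)) :
    Nat.nth (· ∈ blockStarts n B) r < n := by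
  by_contra! hle
  have hcard := card_filter_le_nth (Nat.lt_of_succ_lt hr)
  rw [filter_true_of_mem fun j hj ↦ (mem_blockStarts.mp hj).1.2.trans hle] at hcard
  omega

lemma nth_blockStarts_notMem (hr : r + 1 < #(blockStarts n B)) :
    (Nat.nth (· ∈ blockStarts n B) r, n) ∉ B := by
  intro hmem
  have hcard := card_blockStarts_closeBlocks (Nat.lt_of_succ_lt hr)
  rw [closeBlocks, insert_eq_of_mem hmem] at hcard
  omega

lemma mapsTo_closeBlocks (n k r : ℕ) :
    Set.MapsTo (closeBlocks n r) {B | B ∈ bracketings n k ∧ r + 1 < #(blockStarts n B)}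
      {B | B ∈ bracketings n (k + 1) ∧ #(blockStarts n B) = r + 1 ∧ n ∉ blockStarts n B} := by
  rintro B ⟨hB, hr⟩
  obtain ⟨hB, hk⟩ := mem_bracketings.mp hB
  have hr' := Nat.lt_of_succ_lt hr
  refine ⟨mem_bracketings.mpr ⟨?_, ?_⟩, card_blockStarts_closeBlocks hr', fun hlast ↦ ?_⟩
  · exact hB.insert_last (nth_mem_of_lt_card hr') (nth_blockStarts_lt hr)
  · rw [closeBlocks, card_insert_of_notMem (nth_blockStarts_notMem hr), hk]
  · exact (nth_blockStarts_lt hr).not_ge ((isGreatest_blockStarts_closeBlocks hr').2 hlast)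

lemma injOn_closeBlocks (n r : ℕ) :
    Set.InjOn (closeBlocks n r) {B | r + 1 < #(blockStarts n B)} := by
  intro B hB C hC heq
  have hnth : Nat.nth (· ∈ blockStarts n B) r = Nat.nth (· ∈ blockStarts n C) r :=
    (isGreatest_blockStarts_closeBlocks (Nat.lt_of_succ_lt hB)).unique
      (heq ▸ isGreatest_blockStarts_closeBlocks (Nat.lt_of_succ_lt hC))
  rw [closeBlocks, closeBlocks, hnth] at heq
  rw [← erase_insert (nth_blockStarts_notMem hB), hnth, heq,
    erase_insert (nth_blockStarts_notMem hC)]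

lemma surjOn_closeBlocks (k r : ℕ) (hn : 0 < n) :
    Set.SurjOn (closeBlocks n r) {B | B ∈ bracketings n k ∧ r + 1 < #(blockStarts n B)}
      {B | B ∈ bracketings n (k + 1) ∧ #(blockStarts n B) = r + 1 ∧ n ∉ blockStarts n B} := by
  rintro B ⟨hB, hr, hlast⟩
  obtain ⟨hB, hk⟩ := mem_bracketings.mp hB
  obtain ⟨a, C, hC, haC, rfl, ha, hlt⟩ := hB.exists_eq_insert_last hn hlast
  rw [blockStarts_insert_last] at hr
  rw [card_insert_of_notMem haC] at hk
  refine ⟨C, ⟨mem_bracketings.mpr ⟨hC, Nat.succ_injective hk⟩, hr ▸ hlt⟩, ?_⟩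
  rw [closeBlocks, nth_eq_of_card_filter_le ha hr]

lemma card_bracketings_last_notMem_blockStarts (k r : ℕ) (hn : 0 < n) :
    #{B ∈ bracketings n (k + 1) | #(blockStarts n B) = r + 1 ∧ n ∉ blockStarts n B} =
      ∑ s ∈ Icc (r + 2) n, bracketingCount n k s := by
  have hrange : {B ∈ bracketings n k | #(blockStarts n B) ∈ Icc (r + 2) n} =
      {B ∈ bracketings n k | r + 1 < #(blockStarts n B)} :=
    filter_congr fun B _ ↦ by simp [card_blockStarts_le, Nat.succ_le_iff]
  simp only [bracketingCount]
  rw [sum_card_fiberwise_eq_card_filter, hrange]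
  symm
  apply card_nbij (closeBlocks n r) <;> simp only [coe_filter]
  · exact mapsTo_closeBlocks n k r
  · exact (injOn_closeBlocks n r).mono fun B hB ↦ hB.2
  · exact surjOn_closeBlocks k r hn

lemma card_bracketings_last_mem_blockStarts (n k r : ℕ) :
    #{B ∈ bracketings (n + 1) k | #(blockStarts (n + 1) B) = r + 1 ∧
      n + 1 ∈ blockStarts (n + 1) B} = bracketingCount n k r := by
  rw [bracketingCount]
  congr 1
  ext B
  simp only [mem_filter, mem_bracketings]
  constructor
  · rintro ⟨⟨hB, hk⟩, hr, hlast⟩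
    have hB' := isBracketing_succ_and_last_mem_iff.mp ⟨hB, hlast⟩
    rw [hB'.card_blockStarts_succ] at hr
    exact ⟨⟨hB', hk⟩, Nat.succ_injective hr⟩
  · rintro ⟨⟨hB, hk⟩, hr⟩
    obtain ⟨hB', hlast⟩ := isBracketing_succ_and_last_mem_iff.mpr hB
    exact ⟨⟨hB', hk⟩, by rw [hB.card_blockStarts_succ, hr], hlast⟩

lemma bracketingCount_succ_succ_succ (n k r : ℕ) :
    bracketingCount (n + 1) (k + 1) (r + 1) =
      bracketingCount n (k + 1) r + ∑ s ∈ Icc (r + 2) (n + 1), bracketingCount (n + 1) k s := by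
  rw [bracketingCount, ← card_filter_add_card_filter_not (fun B ↦ n + 1 ∈ blockStarts (n + 1) B),
    filter_filter, filter_filter, card_bracketings_last_mem_blockStarts,
    card_bracketings_last_notMem_blockStarts k r n.succ_pos]

lemma bracketingCount_zero_brackets (n r : ℕ) :
    bracketingCount n 0 r = if r = n then 1 else 0 := by
  have hempty : bracketings n 0 = {∅} := by
    ext B
    rw [mem_bracketings, card_eq_zero, mem_singleton]
    exact and_iff_right_of_imp fun h ↦ h ▸ ⟨by simp, by simp⟩
  simp only [bracketingCount, hempty, filter_singleton, card_blockStarts_empty, eq_comm (a := r)]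
  split_ifs <;> rfl

lemma bracketingCount_zero_blocks (k : ℕ) (hn : 0 < n) : bracketingCount n k 0 = 0 := by
  refine card_eq_zero.mpr (filter_eq_empty_iff.mpr fun B hB hcard ↦ ?_)
  have hone := (mem_bracketings.mp hB).1.one_mem_blockStarts hn
  rw [card_eq_zero.mp hcard] at hone
  exact notMem_empty _ hone

lemma bracketingCount_succ_self (n k : ℕ) : bracketingCount n (k + 1) n = 0 := by
  refine card_eq_zero.mpr (filter_eq_empty_iff.mpr fun B hB hcard ↦ ?_)
  obtain ⟨hB, hk⟩ := mem_bracketings.mp hB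
  exact (hB.card_blockStarts_lt (card_pos.mp (by omega))).ne hcard

lemma bracketingCount_succ_add_two_succ (n k r : ℕ) (hr : r < n) :
    bracketingCount (n + 1) (k + 2) (r + 1) =
      bracketingCount n (k + 2) r +
        ∑ s ∈ Ico (r + 2) (n + 1), bracketingCount (n + 1) (k + 1) s := by
  rw [bracketingCount_succ_succ_succ, ← Ico_add_one_right_eq_Icc, sum_Ico_succ_top (by omega),
    bracketingCount_succ_self, add_zero]

end Recurrence

section ClosedForm

lemma sum_Ico_mul_choose (c m j : ℕ) :
    ∑ s ∈ Ico (c + 1) (c + 1 + m), s * (c + m - s).choose j =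
      (m + 1).choose (j + 2) + c * m.choose (j + 1) := by
  induction m generalizing c with
  | zero => simp [Nat.choose_eq_zero_of_lt]
  | succ m ih =>
    have hshift : c + 1 + (m + 1) = c + 1 + 1 + m := by ring
    have hfirst : c + (m + 1) - (c + 1) = m := by omega
    have htail := ih (c + 1)
    rw [show c + 1 + m = c + (m + 1) by ring] at htail
    rw [sum_eq_sum_Ico_succ_bot (by omega), hshift, hfirst, htail,
      Nat.choose_succ_succ (m + 1) (j + 1), Nat.choose_succ_succ m j]
    ring

lemma bracketingCount_one_bracket {n r : ℕ} (hr : r < n) : bracketingCount n 1 r = r := by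
  induction r generalizing n with
  | zero => exact bracketingCount_zero_blocks 1 hr
  | succ r ih =>
    obtain ⟨n, rfl⟩ := Nat.exists_eq_add_one_of_ne_zero (Nat.ne_zero_of_lt hr)
    rw [bracketingCount_succ_succ_succ, ih (by omega)]
    simp only [bracketingCount_zero_brackets, sum_ite_eq', mem_Icc]
    rw [if_pos (by omega)]

lemma choose_mul_choose_recurrence_s10 (j m r : ℕ) :
    (j + 1) * ((r + 1) * (r + m + j + 3).choose (j + 1) * m.choose (j + 1)) =
      (j + 1) * (r * (r + m + j + 2).choose (j + 1) * m.choose (j + 1)) +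
        (j + 2) * ((r + m + j + 2).choose j *
          ((m + 1).choose (j + 2) + (r + 1) * m.choose (j + 1))) := by
  have hpascal : (r + m + j + 3).choose (j + 1) =
      (r + m + j + 2).choose j + (r + m + j + 2).choose (j + 1) := Nat.choose_succ_succ _ _
  have hupper : (r + m + j + 2).choose (j + 1) * (j + 1) =
      (r + m + j + 2).choose j * (r + m + 2) := by
    rw [Nat.choose_succ_right_eq]
    congr 1
    omega
  have hlower : (m + 1) * m.choose (j + 1) = (m + 1).choose (j + 2) * (j + 2) :=
    Nat.add_one_mul_choose_eq m (j + 1)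
  rw [hpascal]
  zify at hupper hlower ⊢
  linear_combination m.choose (j + 1) * hupper + (r + m + j + 2).choose j * hlower

theorem succ_mul_bracketingCount (j : ℕ) {n r : ℕ} (hr : r < n) :
    (j + 1) * bracketingCount n (j + 1) r = r * (n + j).choose j * (n - r - 1).choose j := by
  induction j generalizing n r with
  | zero => simp [bracketingCount_one_bracket hr]
  | succ j ihj =>
    induction r generalizing n with
    | zero => simp [bracketingCount_zero_blocks _ hr]
    | succ r ihr =>
      obtain ⟨m, rfl⟩ := Nat.exists_eq_add_of_lt hr
      have hprev : (j + 2) * bracketingCount (r + 1 + m) (j + 2) r =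
          r * (r + m + j + 2).choose (j + 1) * m.choose (j + 1) := by
        rw [ihr (by omega), show r + 1 + m + (j + 1) = r + m + j + 2 by ring,
          show r + 1 + m - r - 1 = m by omega]
      have hsum : (j + 1) * ∑ s ∈ Ico (r + 2) (r + 1 + m + 1),
            bracketingCount (r + 1 + m + 1) (j + 1) s =
          (r + m + j + 2).choose j * ((m + 1).choose (j + 2) + (r + 1) * m.choose (j + 1)) := by
        rw [← sum_Ico_mul_choose, mul_sum, mul_sum, add_right_comm (r + 1) m 1]
        refine sum_congr rfl fun s hs ↦ ?_
        rw [ihj (mem_Ico.mp hs).2, show r + 1 + 1 + m + j = r + m + j + 2 by ring,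
          show r + 1 + 1 + m - s - 1 = r + 1 + m - s by omega]
        ring
      have htop : r + 1 + m + 1 + (j + 1) = r + m + j + 3 := by ring
      have hbot : r + 1 + m + 1 - (r + 1) - 1 = m := by omega
      refine Nat.eq_of_mul_eq_mul_left (Nat.add_one_pos j) ?_
      rw [htop, hbot, choose_mul_choose_recurrence_s10, ← hprev, ← hsum,
        bracketingCount_succ_add_two_succ _ _ _ (by omega)]
      ring

end ClosedForm

section IntervalFamilies

/-- The items of the list `1, …, n` enclosed by the bracket `p`. -/
def enclosed (p : ℕ × ℕ) : Finset ℕ := Icc p.1 p.2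

variable {n k : ℕ}

lemma injOn_enclosed : Set.InjOn enclosed {p | p.1 ≤ p.2} := by
  intro p hp q hq h
  obtain ⟨hqp, hpq⟩ := (Icc_subset_Icc_iff hp).mp h.subset
  obtain ⟨hpq', hqp'⟩ := (Icc_subset_Icc_iff hq).mp h.superset
  ext <;> omega

lemma disjoint_enclosed_iff {p q : ℕ × ℕ} (hp : p.1 ≤ p.2) (hq : q.1 ≤ q.2) :
    Disjoint (enclosed p) (enclosed q) ↔ p.2 < q.1 ∨ q.2 < p.1 := by
  simp only [disjoint_left, enclosed, mem_Icc]
  constructor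
  · intro h
    have := @h p.1
    have := @h q.1
    omega
  · intro h x
    omega

lemma enclosed_nested_or_disjoint_iff {p q : ℕ × ℕ} (hp : p.1 ≤ p.2) (hq : q.1 ≤ q.2) :
    enclosed p ⊆ enclosed q ∨ enclosed q ⊆ enclosed p ∨ Disjoint (enclosed p) (enclosed q) ↔
      (p.1 ≤ q.1 ∧ q.2 ≤ p.2) ∨ (q.1 ≤ p.1 ∧ p.2 ≤ q.2) ∨ p.2 < q.1 ∨ q.2 < p.1 := by
  rw [disjoint_enclosed_iff hp hq, enclosed, enclosed, Icc_subset_Icc_iff hp,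
    Icc_subset_Icc_iff hq, or_left_comm]

lemma isIntNested_image_enclosed_iff {B : Finset (ℕ × ℕ)}
    (hB : ∀ p ∈ B, 1 ≤ p.1 ∧ p.1 < p.2 ∧ p.2 ≤ n) :
    IsIntNested n k (B.image enclosed) ↔ IsBracketing n B ∧ #B = k ∧ (1, n) ∈ B := by
  have hle : ∀ p ∈ B, p.1 ≤ p.2 := fun p hp ↦ (hB p hp).2.1.le
  have hcard : #(B.image enclosed) = #B := card_image_of_injOn (injOn_enclosed.mono hle)
  have hlist : Icc 1 n ∈ B.image enclosed ↔ (1, n) ∈ B := by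
    refine ⟨fun h ↦ ?_, fun h ↦ mem_image_of_mem enclosed h⟩
    obtain ⟨p, hp, hpn⟩ := mem_image.mp h
    have hn : 1 ≤ n := by
      have := hB p hp
      omega
    rwa [← injOn_enclosed (hle p hp) (show (1, n) ∈ {p : ℕ × ℕ | p.1 ≤ p.2} from hn) hpn]
  have hinterval : ∀ A ∈ B.image enclosed,
      2 ≤ #A ∧ ∃ i j, 1 ≤ i ∧ i ≤ j ∧ j ≤ n ∧ A = Icc i j := by
    refine forall_mem_image.mpr fun p hp ↦ ?_
    have hbounds := hB p hp
    refine ⟨?_, p.1, p.2, hbounds.1, hle p hp, hbounds.2.2, rfl⟩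
    rw [enclosed, Nat.card_Icc]
    omega
  have hlaminar : (∀ A ∈ B.image enclosed, ∀ C ∈ B.image enclosed, A ⊆ C ∨ C ⊆ A ∨ Disjoint A C) ↔
      IsBracketing n B := by
    simp only [forall_mem_image]
    exact ⟨fun h ↦ ⟨hB, fun p hp q hq ↦
        (enclosed_nested_or_disjoint_iff (hle p hp) (hle q hq)).mp (h hp hq)⟩,
      fun h p hp q hq ↦
        (enclosed_nested_or_disjoint_iff (hle p hp) (hle q hq)).mpr (h.laminar p hp q hq)⟩
  rw [IsIntNested, hcard, hlist, hlaminar, and_iff_right hinterval]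
  tauto

lemma IsIntNested.exists_image_enclosed_eq {S : Finset (Finset ℕ)} (hS : IsIntNested n k S) :
    ∃ B : Finset (ℕ × ℕ), (∀ p ∈ B, 1 ≤ p.1 ∧ p.1 < p.2 ∧ p.2 ≤ n) ∧ B.image enclosed = S := by
  obtain ⟨-, -, hinterval, -⟩ := hS
  refine subset_set_image_iff.mp fun A hA ↦ ?_
  obtain ⟨hcard, i, j, hi, -, hj, rfl⟩ := hinterval A hA
  rw [Nat.card_Icc] at hcard
  exact ⟨(i, j), ⟨hi, by dsimp only; omega, hj⟩, rfl⟩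

lemma card_isIntNested (k : ℕ) (hn : 2 ≤ n) :
    Nat.card {S : Finset (Finset ℕ) // IsIntNested n k S} = bracketingCount n k 1 := by
  have hmem {B} : B ∈ ({B ∈ bracketings n k | #(blockStarts n B) = 1} : Finset _) ↔
      IsBracketing n B ∧ #B = k ∧ (1, n) ∈ B := by
    rw [mem_filter, mem_bracketings, and_assoc]
    exact and_congr_right fun hB ↦ and_congr_right fun _ ↦ hB.card_blockStarts_eq_one_iff hn
  have hinj : Set.InjOn (image enclosed)
      ({B ∈ bracketings n k | #(blockStarts n B) = 1} : Finset (Finset (ℕ × ℕ))) := by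
    intro B hB C hC h
    have hle : ∀ p ∈ B ∪ C, p.1 ≤ p.2 := fun p hp ↦ (mem_union.mp hp).elim
      (fun hp ↦ ((hmem.mp hB).1.bounds p hp).2.1.le)
      (fun hp ↦ ((hmem.mp hC).1.bounds p hp).2.1.le)
    exact (image_eq_image_iff_of_injOn (injOn_enclosed.mono hle) subset_union_left
      subset_union_right).mp h
  rw [bracketingCount, ← card_image_of_injOn hinj]
  refine Nat.subtype_card _ fun S ↦ ?_
  rw [mem_image]
  constructor
  · rintro ⟨B, hB, rfl⟩
    have hB := hmem.mp hB
    exact (isIntNested_image_enclosed_iff hB.1.bounds).mpr hB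
  · intro hS
    obtain ⟨B, hB, rfl⟩ := hS.exists_image_enclosed_eq
    exact ⟨B, hmem.mpr ((isIntNested_image_enclosed_iff hB).mp hS), rfl⟩

end IntervalFamilies

/-- The Kirkman–Cayley formula: the number of dissections of a convex polygon
with `n+1` labelled edges by `k-1` pairwise noncrossing diagonals (encoded, per the
classical bijection, as parenthesizations of the list `1,...,n` with `k` couples of
parentheses, i.e. nested families of `k` intervals) is `(1/k) · C(n-2,k-1) · C(n+k-1,k-1)`
(stated multiplicatively), the Kirkman–Cayley number `D_{n+1,k-1}`. -/
theorem stmt10 (n k : ℕ) (hn : 2 ≤ n) (hk1 : 1 ≤ k) (hk : k ≤ n - 1) :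
    k * Nat.card {S : Finset (Finset ℕ) // IsIntNested n k S} =
      (n - 2).choose (k - 1) * (n + k - 1).choose (k - 1) := by
  obtain ⟨j, rfl⟩ := Nat.exists_eq_add_of_le' hk1
  rw [card_isIntNested _ hn, succ_mul_bracketingCount j hn, one_mul, mul_comm, Nat.sub_sub]
  rfl
end

section
/- Let n ≥ 2, 1 ≤ k ≤ n-1, and let (i₁^{m₁},...,i_s^{m_s}) with 3 ≤ i₁ < ... < i_s satisfy Σ m_j = k and Σ i_j m_j = n + 2k - 1. Then the number of dissections of a convex polygon with n+1 labelled edges by k-1 noncrossing diagonals of type (i₁^{m₁},...,i_s^{m_s}) equals (n+k-1)! / (n! · m₁! · m₂! ⋯ m_s!). -/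
/-- The children of `A` in the rooted tree associated with `S`; the cell of the
dissection corresponding to `A ∈ S` has `(children n S A).card + 1` edges. -/
def children (n : ℕ) (S : Finset (Finset ℕ)) (A : Finset ℕ) : Finset (Finset ℕ) :=
  (S ∪ (Finset.Icc 1 n).image (fun x => ({x} : Finset ℕ))).filter
    (fun B => B ⊂ A ∧ ∀ C ∈ S, B ⊂ C → ¬ C ⊂ A)

/-
A nested family of intervals is a plane forest: its members are the inner vertices and the points of
`{1, ..., n}` are the leaves, so a dissection of the given type is a plane tree with `n` leaves and
`m_j` inner vertices with `i_j - 1` children. More generally let `F(n, r, μ)` be the number of plane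
forests with `r` roots, `n` leaves and out-degrees `μ` at the inner vertices, each at least two.
Removing the first root, which is a leaf or an inner vertex with `c` children, gives
`F(n, r + 1, μ) = F(n - 1, r, μ) + ∑_c F(n, r + c, μ - {c})`,
and induction on the number `V = n + |μ| = r + ∑ μ` of vertices yields the count
`r (V - 1)! / (n! ∏_c μ(c)!)`, where `μ(c)` is the multiplicity of `c`. A dissection is the case
`r = 1`, `V = n + k`.
-/

namespace Dissection

open Finset
open scoped Nat

section Rank

variable {α : Type*} [LinearOrder α]

theorem strictMonoOn_card_filter_le (X : Finset α) :
    StrictMonoOn (fun j => #{x ∈ X | x ≤ j}) X := by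
  intro i _ j hj hij
  refine card_lt_card ⟨monotone_filter_right X fun x _ hx => hx.trans hij.le, fun h => ?_⟩
  exact hij.not_ge (mem_filter.1 (h (mem_filter.2 ⟨hj, le_rfl⟩))).2

theorem exists_mem_card_filter_le_eq (X : Finset α) {c : ℕ} (hc : c ∈ Icc 1 #X) :
    ∃ j ∈ X, #{x ∈ X | x ≤ j} = c := by
  have maps : Set.MapsTo (fun j => #{x ∈ X | x ≤ j}) X (Icc 1 #X) := fun j hj =>
    mem_Icc.2 ⟨card_pos.2 ⟨j, mem_filter.2 ⟨hj, le_rfl⟩⟩, card_filter_le _ _⟩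
  exact surjOn_of_injOn_of_card_le _ maps (strictMonoOn_card_filter_le X).injOn (by simp) hc

theorem card_filter_ge_add_card_filter_le {X : Finset α} {j : α} (hj : j ∈ X) :
    #{x ∈ X | j ≤ x} + #{x ∈ X | x ≤ j} = #X + 1 := by
  have union : {x ∈ X | j ≤ x} ∪ {x ∈ X | x ≤ j} = X := by
    rw [← filter_or, filter_true_of_mem fun x _ => le_total j x]
  have inter : {x ∈ X | j ≤ x} ∩ {x ∈ X | x ≤ j} = {j} := by
    ext x
    grind
  rw [← card_union_add_card_inter, union, inter, card_singleton]

end Rank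

section Multisets

variable {α ι : Type*} [Fintype ι]

theorem card_sum_replicate (f : ι → α) (m : ι → ℕ) :
    (∑ j, Multiset.replicate (m j) (f j)).card = ∑ j, m j := by
  simp

theorem sum_sum_replicate (f m : ι → ℕ) :
    (∑ j, Multiset.replicate (m j) (f j)).sum = ∑ j, m j * f j := by
  simp only [Multiset.sum_sum, Multiset.sum_replicate, smul_eq_mul]

theorem exists_eq_of_mem_sum_replicate {f : ι → α} {m : ι → ℕ} {c : α}
    (hc : c ∈ ∑ j, Multiset.replicate (m j) (f j)) : ∃ j, f j = c := by
  obtain ⟨j, -, hj⟩ := Multiset.mem_sum.1 hc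
  exact ⟨j, (Multiset.eq_of_mem_replicate hj).symm⟩

variable [DecidableEq α] {f : ι → α}

/-- The product of the factorials of the multiplicities in `μ`, which is the factor `m₁! ⋯ m_s!` of
the formula counting dissections. -/
def multiplicityFactorial (μ : Multiset α) : ℕ := ∏ c ∈ μ.toFinset, (μ.count c)!

theorem multiplicityFactorial_eq_prod {μ : Multiset α} {s : Finset α} (h : μ.toFinset ⊆ s) :
    multiplicityFactorial μ = ∏ c ∈ s, (μ.count c)! := by
  refine prod_subset h fun c _ hc => ?_
  rw [Multiset.count_eq_zero_of_notMem (Multiset.mem_toFinset.not.1 hc), Nat.factorial_zero]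

theorem multiplicityFactorial_eq_count_mul_erase {μ : Multiset α} {c : α} (hc : c ∈ μ) :
    multiplicityFactorial μ = μ.count c * multiplicityFactorial (μ.erase c) := by
  have hc' : c ∈ μ.toFinset := Multiset.mem_toFinset.2 hc
  have herase : (μ.erase c).toFinset ⊆ μ.toFinset :=
    Multiset.toFinset_subset.2 (Multiset.erase_subset c μ)
  have hrest : ∏ d ∈ μ.toFinset.erase c, ((μ.erase c).count d)! =
      ∏ d ∈ μ.toFinset.erase c, (μ.count d)! :=
    prod_congr rfl fun d hd => by rw [Multiset.count_erase_of_ne (ne_of_mem_erase hd)]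
  rw [multiplicityFactorial_eq_prod herase, multiplicityFactorial, ← mul_prod_erase _ _ hc',
    ← mul_prod_erase _ _ hc', hrest, Multiset.count_erase_self, ← mul_assoc,
    Nat.mul_factorial_pred (Multiset.count_ne_zero.2 hc)]

theorem count_sum_replicate (hf : f.Injective) (m : ι → ℕ) (j : ι) :
    (∑ l, Multiset.replicate (m l) (f l)).count (f j) = m j := by
  classical
  simp [Multiset.count_sum', Multiset.count_replicate, hf.eq_iff]

theorem eq_sum_replicate_iff (hf : f.Injective) (m : ι → ℕ) (μ : Multiset α) :
    μ = ∑ j, Multiset.replicate (m j) (f j) ↔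
      μ.card = ∑ j, m j ∧ ∀ j, μ.count (f j) = m j := by
  refine ⟨?_, fun ⟨hcard, hcount⟩ => ?_⟩
  · rintro rfl
    exact ⟨card_sum_replicate f m, count_sum_replicate hf m⟩
  · refine (Multiset.eq_of_le_of_card_le (Multiset.le_iff_count.2 fun c => ?_)
      (hcard.trans (card_sum_replicate f m).symm).le).symm
    by_cases hc : c ∈ ∑ j, Multiset.replicate (m j) (f j)
    · obtain ⟨j, rfl⟩ := exists_eq_of_mem_sum_replicate hc
      rw [count_sum_replicate hf, hcount]
    · rw [Multiset.count_eq_zero_of_notMem hc]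
      exact Nat.zero_le _

theorem multiplicityFactorial_sum_replicate (hf : f.Injective) (m : ι → ℕ) :
    multiplicityFactorial (∑ j, Multiset.replicate (m j) (f j)) = ∏ j, (m j)! := by
  have hsub : (∑ j, Multiset.replicate (m j) (f j)).toFinset ⊆ univ.image f := fun c hc => by
    obtain ⟨j, rfl⟩ := exists_eq_of_mem_sum_replicate (Multiset.mem_toFinset.1 hc)
    exact mem_image_of_mem f (mem_univ j)
  rw [multiplicityFactorial_eq_prod hsub, prod_image hf.injOn]
  exact prod_congr rfl fun j _ => by rw [count_sum_replicate hf]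

theorem sum_multiplicityFactorial_mul {μ : Multiset ℕ} {g : ℕ → ℕ} {K r M : ℕ}
    (hg : ∀ c ∈ μ, K * multiplicityFactorial (μ.erase c) * g c = (r + c) * M) :
    ∑ c ∈ μ.toFinset, K * multiplicityFactorial μ * g c = (r * μ.card + μ.sum) * M := by
  calc ∑ c ∈ μ.toFinset, K * multiplicityFactorial μ * g c
      = ∑ c ∈ μ.toFinset, μ.count c * ((r + c) * M) := by
        refine sum_congr rfl fun c hc => ?_
        have hcμ := Multiset.mem_toFinset.1 hc
        rw [multiplicityFactorial_eq_count_mul_erase hcμ, ← hg c hcμ]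
        ring
    _ = (μ.map fun c => (r + c) * M).sum := by
        simp only [sum_multiset_map_count, smul_eq_mul]
    _ = (r * μ.card + μ.sum) * M := by
        rw [Multiset.sum_map_mul_right, Multiset.sum_map_add, Multiset.map_const',
          Multiset.sum_replicate, Multiset.map_id', smul_eq_mul, mul_comm r]

end Multisets

/-- A laminar family of intervals of `{a, ..., b}`, each with at least two elements, viewed as a
forest ordered by inclusion. The leaves are the points of `{a, ..., b}` and are not recorded. -/
structure IsIntervalForest (a b : ℕ) (S : Finset (Finset ℕ)) : Prop where
  exists_eq_Icc : ∀ A ∈ S, ∃ p q, a ≤ p ∧ p < q ∧ q ≤ b ∧ A = Icc p q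
  nested_or_disjoint : ∀ A ∈ S, ∀ B ∈ S, A ⊆ B ∨ B ⊆ A ∨ Disjoint A B

/-- The elements of `A` that no member of `S` joins to their successor. If the members of an
interval forest `S` cover no point outside the interval `A`, these are the right ends of the blocks
into which the maximal members of `S` cut `A`, a point in no member of `S` being a block by itself;
so they index the roots of `S` in `A`, leaves included. -/
def blockEnds (A : Finset ℕ) (S : Finset (Finset ℕ)) : Finset ℕ :=
  {x ∈ A | ∀ C ∈ S, x ∈ C → x + 1 ∉ C}

/-- The right ends of the children of `A` in the forest `S`, leaves included. -/
def childEnds (S : Finset (Finset ℕ)) (A : Finset ℕ) : Finset ℕ :=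
  blockEnds A {C ∈ S | C ⊂ A}

/-- The multiset of the numbers of children of the inner vertices of the forest `S`. -/
def outDegrees (S : Finset (Finset ℕ)) : Multiset ℕ := S.val.map fun A => #(childEnds S A)

/-- The union of the members of `S` containing `a`: the root above `a` in an interval forest on
`{a, ..., b}`, and the junk value `∅` if no member contains `a`, that is, if the leaf `a` is itself
the first root. -/
def firstRoot (a : ℕ) (S : Finset (Finset ℕ)) : Finset ℕ := {A ∈ S | a ∈ A}.sup id

theorem mem_blockEnds {A : Finset ℕ} {S : Finset (Finset ℕ)} {x : ℕ} :
    x ∈ blockEnds A S ↔ x ∈ A ∧ ∀ C ∈ S, x ∈ C → x + 1 ∉ C :=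
  mem_filter

theorem mem_childEnds {S : Finset (Finset ℕ)} {A : Finset ℕ} {x : ℕ} :
    x ∈ childEnds S A ↔ x ∈ A ∧ ∀ C ∈ S, C ⊂ A → x ∈ C → x + 1 ∉ C := by
  simp only [childEnds, mem_blockEnds, mem_filter, and_imp]

theorem blockEnds_insert_Icc (a b j : ℕ) (T : Finset (Finset ℕ)) :
    blockEnds (Icc a b) (insert (Icc a j) T) = {x ∈ blockEnds (Icc a b) T | j ≤ x} := by
  ext x
  simp only [mem_blockEnds, mem_filter, forall_mem_insert, mem_Icc]
  grind

theorem card_blockEnds_of_forall_notMem {a b : ℕ} {S : Finset (Finset ℕ)} (hab : a ≤ b)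
    (ha : ∀ A ∈ S, a ∉ A) :
    #(blockEnds (Icc a b) S) = #(blockEnds (Icc (a + 1) b) S) + 1 := by
  have h : blockEnds (Icc a b) S = insert a (blockEnds (Icc (a + 1) b) S) := by
    ext x
    simp only [mem_blockEnds, mem_insert, mem_Icc]
    grind
  rw [h, card_insert_of_notMem fun h => by grind [mem_blockEnds]]

theorem lt_and_Icc_notMem_of_two_le_card {a b j : ℕ} {T : Finset (Finset ℕ)}
    (hcard : 2 ≤ #{x ∈ blockEnds (Icc a b) T | x ≤ j}) : a < j ∧ Icc a j ∉ T := by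
  obtain ⟨y, hy, hyj⟩ := exists_mem_ne hcard j
  obtain ⟨hy, hylej⟩ := mem_filter.1 hy
  obtain ⟨hyab, hycut⟩ := mem_blockEnds.1 hy
  have hay := (mem_Icc.1 hyab).1
  refine ⟨by lia, fun hmem => ?_⟩
  exact hycut _ hmem (mem_Icc.2 ⟨hay, hylej⟩) (mem_Icc.2 ⟨by lia, by lia⟩)

namespace IsIntervalForest

variable {a b j : ℕ} {S T : Finset (Finset ℕ)}

theorem mem_Icc_of_mem (hS : IsIntervalForest a b S) {A : Finset ℕ} (hA : A ∈ S) {x : ℕ}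
    (hx : x ∈ A) : x ∈ Icc a b := by
  obtain ⟨p, q, hap, -, hqb, rfl⟩ := hS.exists_eq_Icc A hA
  exact Icc_subset_Icc hap hqb hx

theorem subset_or_subset (hS : IsIntervalForest a b S) {A B : Finset ℕ} (hA : A ∈ S) (hB : B ∈ S)
    {x : ℕ} (hxA : x ∈ A) (hxB : x ∈ B) : A ⊆ B ∨ B ⊆ A := by
  rcases hS.nested_or_disjoint A hA B hB with h | h | h
  · exact .inl h
  · exact .inr h
  · exact absurd hxB (disjoint_left.1 h hxA)

theorem mono (hS : IsIntervalForest a b S) (hTS : T ⊆ S) : IsIntervalForest a b T where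
  exists_eq_Icc A hA := hS.exists_eq_Icc A (hTS hA)
  nested_or_disjoint A hA B hB := hS.nested_or_disjoint A (hTS hA) B (hTS hB)

theorem succ_iff : IsIntervalForest (a + 1) b S ↔ IsIntervalForest a b S ∧ ∀ A ∈ S, a ∉ A := by
  refine ⟨fun hS => ⟨⟨fun A hA => ?_, hS.nested_or_disjoint⟩, fun A hA haA => ?_⟩,
    fun ⟨hS, ha⟩ => ⟨fun A hA => ?_, hS.nested_or_disjoint⟩⟩
  · obtain ⟨p, q, hap, hpq, hqb, hAeq⟩ := hS.exists_eq_Icc A hA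
    exact ⟨p, q, by lia, hpq, hqb, hAeq⟩
  · have := mem_Icc.1 (hS.mem_Icc_of_mem hA haA)
    lia
  · obtain ⟨p, q, hap, hpq, hqb, rfl⟩ := hS.exists_eq_Icc A hA
    have := ha _ hA
    exact ⟨p, q, by grind, hpq, hqb, rfl⟩

theorem right_mem_blockEnds (hS : IsIntervalForest a b S) (hab : a ≤ b) :
    b ∈ blockEnds (Icc a b) S := by
  refine mem_blockEnds.2 ⟨right_mem_Icc.2 hab, fun C hC _ hb => ?_⟩
  have := mem_Icc.1 (hS.mem_Icc_of_mem hC hb)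
  lia

theorem subset_Icc_of_mem_blockEnds (hT : IsIntervalForest a b T)
    (hj : j ∈ blockEnds (Icc a b) T) {C : Finset ℕ} (hC : C ∈ T) {x : ℕ} (hxC : x ∈ C)
    (hxj : x ≤ j) : C ⊆ Icc a j := by
  have hcut := (mem_blockEnds.1 hj).2 C hC
  obtain ⟨p, q, hap, -, -, rfl⟩ := hT.exists_eq_Icc C hC
  refine Icc_subset_Icc hap ?_
  grind

theorem insert_Icc (hT : IsIntervalForest a b T) (hj : j ∈ blockEnds (Icc a b) T) (haj : a < j) :
    IsIntervalForest a b (insert (Icc a j) T) := by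
  have nested : ∀ C ∈ T, C ⊆ Icc a j ∨ Disjoint C (Icc a j) := fun C hC =>
    or_iff_not_imp_right.2 fun h => by
      obtain ⟨x, hxC, hxj⟩ := not_disjoint_iff.1 h
      exact hT.subset_Icc_of_mem_blockEnds hj hC hxC (mem_Icc.1 hxj).2
  refine ⟨(forall_mem_insert _ _ _).2 ⟨?_, hT.exists_eq_Icc⟩,
    (forall_mem_insert _ _ _).2 ⟨?_, fun A hA => (forall_mem_insert _ _ _).2 ⟨?_, ?_⟩⟩⟩
  · exact ⟨a, j, le_rfl, haj, (mem_Icc.1 (mem_blockEnds.1 hj).1).2, rfl⟩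
  · exact (forall_mem_insert _ _ _).2
      ⟨.inl subset_rfl, fun C hC => .inr ((nested C hC).imp_right fun h => h.symm)⟩
  · exact (nested A hA).imp_right .inr
  · exact hT.nested_or_disjoint A hA

theorem childEnds_insert_Icc (hT : IsIntervalForest a b T) (hj : j ∈ blockEnds (Icc a b) T)
    (hnew : Icc a j ∉ T) :
    childEnds (insert (Icc a j) T) (Icc a j) = {x ∈ blockEnds (Icc a b) T | x ≤ j} := by
  have hjb := (mem_Icc.1 (mem_blockEnds.1 hj).1).2
  have below : ∀ C ∈ T, ∀ x ∈ C, x ≤ j → C ⊂ Icc a j := fun C hC x hxC hxj =>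
    (hT.subset_Icc_of_mem_blockEnds hj hC hxC hxj).ssubset_of_ne (ne_of_mem_of_not_mem hC hnew)
  ext x
  simp only [mem_childEnds, mem_blockEnds, mem_filter, forall_mem_insert, mem_Icc,
    ssubset_irrefl, false_imp_iff, true_and]
  grind

theorem childEnds_insert_Icc_of_mem (hT : IsIntervalForest a b T)
    (hj : j ∈ blockEnds (Icc a b) T) {A : Finset ℕ} (hA : A ∈ T) :
    childEnds (insert (Icc a j) T) A = childEnds T A := by
  have haj := (mem_Icc.1 (mem_blockEnds.1 hj).1).1
  have hnot : ¬ Icc a j ⊂ A := fun h =>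
    h.2 (hT.subset_Icc_of_mem_blockEnds hj hA (h.1 (left_mem_Icc.2 haj)) haj)
  rw [childEnds, filter_insert, if_neg hnot, childEnds]

theorem outDegrees_insert_Icc (hT : IsIntervalForest a b T) (hj : j ∈ blockEnds (Icc a b) T)
    (hnew : Icc a j ∉ T) :
    outDegrees (insert (Icc a j) T) =
      #{x ∈ blockEnds (Icc a b) T | x ≤ j} ::ₘ outDegrees T := by
  rw [outDegrees, insert_val_of_notMem hnew, Multiset.map_cons, hT.childEnds_insert_Icc hj hnew,
    outDegrees]
  exact congrArg _ (Multiset.map_congr rfl fun A hA => by rw [hT.childEnds_insert_Icc_of_mem hj hA])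

theorem firstRoot_insert_Icc (hT : IsIntervalForest a b T) (hj : j ∈ blockEnds (Icc a b) T) :
    firstRoot a (insert (Icc a j) T) = Icc a j := by
  have haj := (mem_Icc.1 (mem_blockEnds.1 hj).1).1
  refine le_antisymm (Finset.sup_le fun C hC => ?_)
    (le_sup (f := id) (mem_filter.2 ⟨mem_insert_self _ _, left_mem_Icc.2 haj⟩))
  obtain ⟨hC, haC⟩ := mem_filter.1 hC
  rcases mem_insert.1 hC with rfl | hC
  · exact le_rfl
  · exact hT.subset_Icc_of_mem_blockEnds hj hC haC haj

theorem exists_eq_insert_Icc (hS : IsIntervalForest a b S) (ha : ∃ A ∈ S, a ∈ A) :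
    ∃ T j, IsIntervalForest a b T ∧ j ∈ blockEnds (Icc a b) T ∧ a < j ∧ Icc a j ∉ T ∧
      insert (Icc a j) T = S := by
  obtain ⟨A, hA, haA⟩ := ha
  obtain ⟨R, -, hR⟩ := exists_le_maximal {A ∈ S | a ∈ A} (mem_filter.2 ⟨hA, haA⟩)
  obtain ⟨hRS, haR⟩ := mem_filter.1 hR.prop
  obtain ⟨p, j, hap, hpj, hjb, rfl⟩ := hS.exists_eq_Icc R hRS
  obtain rfl : p = a := le_antisymm (mem_Icc.1 haR).1 hap
  refine ⟨S.erase (Icc p j), j, hS.mono (erase_subset _ _), mem_blockEnds.2 ⟨?_, ?_⟩, hpj,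
    notMem_erase _ _, insert_erase hRS⟩
  · exact mem_Icc.2 ⟨hpj.le, hjb⟩
  · intro C hC hjC hj1C
    have hCS := mem_of_mem_erase hC
    have hCR : C ⊆ Icc p j := by
      rcases hS.subset_or_subset hCS hRS hjC (right_mem_Icc.2 hpj.le) with h | h
      · exact h
      · exact hR.le_of_ge (mem_filter.2 ⟨hCS, h haR⟩) h
    have := mem_Icc.1 (hCR hj1C)
    lia

theorem Icc_mem_iff_card_blockEnds_eq_one (hS : IsIntervalForest a b S) (hab : a < b) :
    Icc a b ∈ S ↔ #(blockEnds (Icc a b) S) = 1 := by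
  have hb := hS.right_mem_blockEnds hab.le
  constructor
  · refine fun h => card_eq_one.2 ⟨b, eq_singleton_iff_unique_mem.2 ⟨hb, fun x hx => ?_⟩⟩
    obtain ⟨hx, hcut⟩ := mem_blockEnds.1 hx
    have := hcut _ h hx
    grind
  · intro hcard
    have only_b : ∀ x ∈ blockEnds (Icc a b) S, x = b := fun x hx =>
      card_le_one.1 hcard.le x hx b hb
    have ha : ∃ A ∈ S, a ∈ A := by
      by_contra! h
      exact hab.ne (only_b a (mem_blockEnds.2
        ⟨left_mem_Icc.2 hab.le, fun C hC haC => absurd haC (h C hC)⟩))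
    obtain ⟨T, j, -, hj, -, -, rfl⟩ := hS.exists_eq_insert_Icc ha
    obtain rfl := only_b j (blockEnds_insert_Icc a b j T ▸ mem_filter.2 ⟨hj, le_rfl⟩)
    exact mem_insert_self _ _

end IsIntervalForest

open Classical in
/-- The interval forests on `{a, ..., b}` with `r` roots, leaves included, and with out-degrees `μ`
at the inner vertices. -/
noncomputable def intervalForests (a b r : ℕ) (μ : Multiset ℕ) : Finset (Finset (Finset ℕ)) :=
  {S ∈ (Icc a b).powerset.powerset |
    IsIntervalForest a b S ∧ #(blockEnds (Icc a b) S) = r ∧ outDegrees S = μ}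

theorem mem_intervalForests {a b r : ℕ} {μ : Multiset ℕ} {S : Finset (Finset ℕ)} :
    S ∈ intervalForests a b r μ ↔
      IsIntervalForest a b S ∧ #(blockEnds (Icc a b) S) = r ∧ outDegrees S = μ := by
  classical
  rw [intervalForests, mem_filter, and_iff_right_of_imp]
  intro h
  exact mem_powerset.2 fun A hA => mem_powerset.2 fun x hx => h.1.mem_Icc_of_mem hA hx

section Recurrence

variable {a b r c : ℕ} {μ : Multiset ℕ}

theorem insert_Icc_mem_intervalForests_iff {T : Finset (Finset ℕ)} {j : ℕ} (hcμ : c ∈ μ)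
    (hT : IsIntervalForest a b T) (hj : j ∈ blockEnds (Icc a b) T) (haj : a < j)
    (hnew : Icc a j ∉ T) (hc : #{x ∈ blockEnds (Icc a b) T | x ≤ j} = c) :
    insert (Icc a j) T ∈ intervalForests a b (r + 1) μ ↔
      T ∈ intervalForests a b (r + c) (μ.erase c) := by
  have hroots := card_filter_ge_add_card_filter_le hj
  rw [mem_intervalForests, mem_intervalForests, blockEnds_insert_Icc,
    hT.outDegrees_insert_Icc hj hnew, hc, and_iff_right hT, and_iff_right (hT.insert_Icc hj haj)]
  refine and_congr (by lia) ⟨?_, ?_⟩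
  · rintro rfl
    rw [Multiset.erase_cons_head]
  · intro h
    rw [h, Multiset.cons_erase hcμ]

open Classical in
/-- The forests counted by `intervalForests` whose first root is an inner vertex with `c` children,
as opposed to the leaf `a`. -/
noncomputable def innerFirstRootForests (a b r : ℕ) (μ : Multiset ℕ) (c : ℕ) :
    Finset (Finset (Finset ℕ)) :=
  {S ∈ intervalForests a b r μ | (∃ A ∈ S, a ∈ A) ∧ #(childEnds S (firstRoot a S)) = c}

theorem mem_innerFirstRootForests_iff (hcμ : c ∈ μ) (hc : 2 ≤ c) {S : Finset (Finset ℕ)} :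
    S ∈ innerFirstRootForests a b (r + 1) μ c ↔
      ∃ T ∈ intervalForests a b (r + c) (μ.erase c), ∃ j ∈ blockEnds (Icc a b) T,
        #{x ∈ blockEnds (Icc a b) T | x ≤ j} = c ∧ insert (Icc a j) T = S := by
  rw [innerFirstRootForests, mem_filter]
  constructor
  · rintro ⟨hS, hcov, hdeg⟩
    obtain ⟨T, j, hT, hj, haj, hnew, rfl⟩ :=
      (mem_intervalForests.1 hS).1.exists_eq_insert_Icc hcov
    rw [hT.firstRoot_insert_Icc hj, hT.childEnds_insert_Icc hj hnew] at hdeg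
    exact ⟨T, (insert_Icc_mem_intervalForests_iff hcμ hT hj haj hnew hdeg).1 hS, j, hj, hdeg, rfl⟩
  · rintro ⟨T, hTF, j, hj, hdeg, rfl⟩
    have hT := (mem_intervalForests.1 hTF).1
    obtain ⟨haj, hnew⟩ := lt_and_Icc_notMem_of_two_le_card (hc.trans hdeg.ge)
    refine ⟨(insert_Icc_mem_intervalForests_iff hcμ hT hj haj hnew hdeg).2 hTF,
      ⟨Icc a j, mem_insert_self _ _, left_mem_Icc.2 haj.le⟩, ?_⟩
    rw [hT.firstRoot_insert_Icc hj, hT.childEnds_insert_Icc hj hnew, hdeg]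

theorem card_innerFirstRootForests (hcμ : c ∈ μ) (hc : 2 ≤ c) :
    #(innerFirstRootForests a b (r + 1) μ c) = #(intervalForests a b (r + c) (μ.erase c)) := by
  have erase_root : ∀ {T j}, T ∈ intervalForests a b (r + c) (μ.erase c) →
      j ∈ blockEnds (Icc a b) T → #{x ∈ blockEnds (Icc a b) T | x ≤ j} = c →
      (insert (Icc a j) T).erase (firstRoot a (insert (Icc a j) T)) = T := by
    intro T j hT hj hdeg
    rw [(mem_intervalForests.1 hT).1.firstRoot_insert_Icc hj, erase_insert
      (lt_and_Icc_notMem_of_two_le_card (hc.trans hdeg.ge)).2]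
  refine card_nbij (fun S => S.erase (firstRoot a S)) ?_ ?_ ?_
  · intro S hS
    obtain ⟨T, hT, j, hj, hdeg, rfl⟩ := (mem_innerFirstRootForests_iff hcμ hc).1 hS
    simpa only [mem_coe, erase_root hT hj hdeg] using hT
  · intro S hS S' hS' heq
    obtain ⟨T, hT, j, hj, hdeg, rfl⟩ := (mem_innerFirstRootForests_iff hcμ hc).1 hS
    obtain ⟨T', hT', j', hj', hdeg', rfl⟩ := (mem_innerFirstRootForests_iff hcμ hc).1 hS'
    simp only [erase_root hT hj hdeg, erase_root hT' hj' hdeg'] at heq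
    subst heq
    rw [(strictMonoOn_card_filter_le _).injOn hj hj' (hdeg.trans hdeg'.symm)]
  · intro T hT
    have hroots := (mem_intervalForests.1 hT).2.1
    obtain ⟨j, hj, hdeg⟩ := exists_mem_card_filter_le_eq (blockEnds (Icc a b) T) (c := c)
      (mem_Icc.2 ⟨by lia, by lia⟩)
    exact ⟨_, (mem_innerFirstRootForests_iff hcμ hc).2 ⟨T, hT, j, hj, hdeg, rfl⟩,
      erase_root hT hj hdeg⟩

theorem mem_intervalForests_succ_left_iff (hab : a ≤ b) {S : Finset (Finset ℕ)} :
    S ∈ intervalForests (a + 1) b r μ ↔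
      S ∈ intervalForests a b (r + 1) μ ∧ ¬ ∃ A ∈ S, a ∈ A := by
  rw [mem_intervalForests, mem_intervalForests, IsIntervalForest.succ_iff, not_exists]
  simp only [not_and]
  constructor
  · rintro ⟨⟨hS, ha⟩, rfl, hμ⟩
    exact ⟨⟨hS, card_blockEnds_of_forall_notMem hab ha, hμ⟩, ha⟩
  · rintro ⟨⟨hS, hr, hμ⟩, ha⟩
    have hroots := card_blockEnds_of_forall_notMem hab ha
    exact ⟨⟨hS, ha⟩, Nat.succ_injective (hroots.symm.trans hr), hμ⟩

theorem card_intervalForests_succ (hab : a ≤ b) (hμ : ∀ c ∈ μ, 2 ≤ c) :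
    #(intervalForests a b (r + 1) μ) = #(intervalForests (a + 1) b r μ) +
      ∑ c ∈ μ.toFinset, #(intervalForests a b (r + c) (μ.erase c)) := by
  classical
  have leaf : {S ∈ intervalForests a b (r + 1) μ | ¬ ∃ A ∈ S, a ∈ A} =
      intervalForests (a + 1) b r μ := by
    ext S
    rw [mem_filter, mem_intervalForests_succ_left_iff hab]
  have degree_mem : ∀ S ∈ {S ∈ intervalForests a b (r + 1) μ | ∃ A ∈ S, a ∈ A},
      #(childEnds S (firstRoot a S)) ∈ μ.toFinset := by
    intro S hS
    obtain ⟨hSF, hcov⟩ := mem_filter.1 hS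
    obtain ⟨hSforest, -, rfl⟩ := mem_intervalForests.1 hSF
    obtain ⟨T, j, hT, hj, -, -, rfl⟩ := hSforest.exists_eq_insert_Icc hcov
    rw [hT.firstRoot_insert_Icc hj]
    exact Multiset.mem_toFinset.2 (Multiset.mem_map_of_mem _ (mem_insert_self _ _))
  rw [← card_filter_add_card_filter_not (s := intervalForests a b (r + 1) μ)
    (fun S => ∃ A ∈ S, a ∈ A), leaf, add_comm, card_eq_sum_card_fiberwise degree_mem]
  refine congrArg _ (sum_congr rfl fun c hc => ?_)
  have hcμ := Multiset.mem_toFinset.1 hc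
  rw [filter_filter, ← card_innerFirstRootForests hcμ (hμ c hcμ), innerFirstRootForests]

end Recurrence

section Count

variable {a b : ℕ}

theorem intervalForests_zero_roots (hab : a ≤ b) (μ : Multiset ℕ) :
    intervalForests a b 0 μ = ∅ := by
  refine eq_empty_of_forall_notMem fun S hS => ?_
  obtain ⟨hS, hroots, -⟩ := mem_intervalForests.1 hS
  exact (card_pos.2 ⟨b, hS.right_mem_blockEnds hab⟩).ne' hroots

theorem intervalForests_self_one_zero (a : ℕ) : intervalForests a a 1 0 = {∅} := by
  ext S
  rw [mem_intervalForests, mem_singleton]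
  constructor
  · rintro ⟨-, -, h⟩
    simpa [outDegrees] using h
  · rintro rfl
    exact ⟨⟨by simp, by simp⟩, by simp [blockEnds], by simp [outDegrees]⟩

theorem factorial_mul_card_intervalForests_succ {n r M : ℕ} {μ : Multiset ℕ} (hab : a ≤ b)
    (hμ : ∀ c ∈ μ, 2 ≤ c)
    (leaf : n ! * multiplicityFactorial μ * #(intervalForests (a + 1) b r μ) = r * M)
    (inner : ∀ c ∈ μ, (n + 1)! * multiplicityFactorial (μ.erase c) *
      #(intervalForests a b (r + c) (μ.erase c)) = (r + c) * M) :
    (n + 1)! * multiplicityFactorial μ * #(intervalForests a b (r + 1) μ) =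
      ((n + 1) * r + (r * μ.card + μ.sum)) * M := by
  rw [card_intervalForests_succ hab hμ, mul_add, mul_sum, sum_multiplicityFactorial_mul inner,
    Nat.factorial_succ, mul_assoc (n + 1), mul_assoc (n + 1), leaf]
  ring

-- Here `n` is the number of leaves and `N + 1` is the number of vertices, counted once as leaves
-- and inner vertices and once as roots and children.
theorem factorial_mul_card_intervalForests (N : ℕ) : ∀ (a b n r : ℕ) (μ : Multiset ℕ),
    (∀ c ∈ μ, 2 ≤ c) → a + n = b + 1 → n + μ.card = N + 1 → r + μ.sum = N + 1 →
    n ! * multiplicityFactorial μ * #(intervalForests a b r μ) = r * N ! := by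
  induction N with
  | zero =>
    intro a b n r μ hμ hn hcard hsum
    have h2 : μ.card * 2 ≤ μ.sum := Multiset.card_nsmul_le_sum hμ
    obtain rfl : μ = 0 := Multiset.card_eq_zero.1 (by lia)
    obtain rfl : n = 1 := by simpa using hcard
    obtain rfl : r = 1 := by simpa using hsum
    obtain rfl : a = b := by lia
    simp [intervalForests_self_one_zero, multiplicityFactorial]
  | succ N ih =>
    intro a b n r μ hμ hn hcard hsum
    have h2 : μ.card * 2 ≤ μ.sum := Multiset.card_nsmul_le_sum hμ
    have hab : a ≤ b := by lia
    obtain _ | r := r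
    · simp [intervalForests_zero_roots hab]
    obtain _ | n := n
    · lia
    have leaf : n ! * multiplicityFactorial μ * #(intervalForests (a + 1) b r μ) = r * N ! :=
      ih (a + 1) b n r μ hμ (by lia) (by lia) (by lia)
    have inner : ∀ c ∈ μ, (n + 1)! * multiplicityFactorial (μ.erase c) *
        #(intervalForests a b (r + c) (μ.erase c)) = (r + c) * N ! := by
      intro c hc
      have hcard' := Multiset.card_erase_add_one hc
      have hsum' : c + (μ.erase c).sum = μ.sum := Multiset.sum_erase hc
      exact ih a b (n + 1) (r + c) (μ.erase c) (fun d hd => hμ d (Multiset.mem_of_mem_erase hd))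
        hn (by lia) (by lia)
    have vertices : (n + 1) * r + (r * μ.card + μ.sum) = (r + 1) * (N + 1) := by
      have : (n + 1 + μ.card) * r = (N + 1 + 1) * r := by rw [hcard]
      linarith
    rw [factorial_mul_card_intervalForests_succ hab hμ leaf inner, vertices, Nat.factorial_succ]
    ring

end Count

section Children

/-- The vertices of the tree of a nested family `S` of intervals of `{1, ..., n}`: its members and
the leaves, which are the singletons. -/
def vertices (n : ℕ) (S : Finset (Finset ℕ)) : Finset (Finset ℕ) :=
  S ∪ (Icc 1 n).image fun x => {x}

variable {n : ℕ} {S : Finset (Finset ℕ)} {A B C : Finset ℕ}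

theorem mem_vertices : B ∈ vertices n S ↔ B ∈ S ∨ ∃ x ∈ Icc 1 n, {x} = B := by
  rw [vertices, mem_union, mem_image]

theorem exists_eq_Icc_of_mem_vertices (hS : IsIntervalForest 1 n S) (hB : B ∈ vertices n S) :
    ∃ p q, p ≤ q ∧ B = Icc p q ∧ (p < q → B ∈ S) := by
  rcases mem_vertices.1 hB with hB | ⟨x, -, rfl⟩
  · obtain ⟨p, q, -, hpq, -, rfl⟩ := hS.exists_eq_Icc B hB
    exact ⟨p, q, hpq.le, rfl, fun _ => hB⟩
  · exact ⟨x, x, le_rfl, (Icc_self x).symm, fun h => absurd h (lt_irrefl x)⟩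

theorem subset_or_subset_of_mem_vertices (hS : IsIntervalForest 1 n S) (hB : B ∈ vertices n S)
    (hC : C ∈ vertices n S) {x : ℕ} (hxB : x ∈ B) (hxC : x ∈ C) : B ⊆ C ∨ C ⊆ B := by
  rcases mem_vertices.1 hB with hB | ⟨y, -, rfl⟩
  · rcases mem_vertices.1 hC with hC | ⟨y, -, rfl⟩
    · exact hS.subset_or_subset hB hC hxB hxC
    · rw [mem_singleton.1 hxC] at hxB
      exact .inr (singleton_subset_iff.2 hxB)
  · rw [mem_singleton.1 hxB] at hxC
    exact .inl (singleton_subset_iff.2 hxC)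

theorem mem_children_iff_maximal (hS : IsIntervalForest 1 n S) :
    B ∈ children n S A ↔ Maximal (fun B => B ∈ vertices n S ∧ B ⊂ A) B := by
  rw [children, ← vertices, mem_filter]
  constructor
  · rintro ⟨hB, hBA, hmax⟩
    refine ⟨⟨hB, hBA⟩, fun C ⟨hC, hCA⟩ hBC => ?_⟩
    rcases mem_vertices.1 hC with hC | ⟨x, -, rfl⟩
    · by_contra hCB
      exact hmax C hC ⟨hBC, hCB⟩ hCA
    · obtain ⟨p, q, hpq, rfl, -⟩ := exists_eq_Icc_of_mem_vertices hS hB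
      exact ((nonempty_Icc.2 hpq).subset_singleton_iff.1 hBC).ge
  · rintro ⟨⟨hB, hBA⟩, hmax⟩
    exact ⟨hB, hBA, fun C hC hBC hCA => hBC.2 (hmax ⟨mem_vertices.2 (.inl hC), hCA⟩ hBC.1)⟩

theorem sup_id_Icc {p q : ℕ} (hpq : p ≤ q) : (Icc p q).sup id = q :=
  le_antisymm (Finset.sup_le fun _ hx => (mem_Icc.1 hx).2)
    (le_sup (f := id) (right_mem_Icc.2 hpq))

theorem sup_mem_of_mem_vertices (hS : IsIntervalForest 1 n S) (hB : B ∈ vertices n S) :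
    B.sup id ∈ B := by
  obtain ⟨p, q, hpq, rfl, -⟩ := exists_eq_Icc_of_mem_vertices hS hB
  rw [sup_id_Icc hpq]
  exact right_mem_Icc.2 hpq

theorem sup_mem_childEnds (hS : IsIntervalForest 1 n S) (hB : B ∈ children n S A) :
    B.sup id ∈ childEnds S A := by
  have hmax := (mem_children_iff_maximal hS).1 hB
  obtain ⟨hBV, hBA⟩ := hmax.prop
  have hsup := sup_mem_of_mem_vertices hS hBV
  refine mem_childEnds.2 ⟨hBA.1 hsup, fun C hC hCA hsupC hsucc => ?_⟩
  have hCV : C ∈ vertices n S := mem_vertices.2 (.inl hC)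
  have hCB : C ⊆ B := (subset_or_subset_of_mem_vertices hS hBV hCV hsup hsupC).elim
    (fun h => hmax.le_of_ge ⟨hCV, hCA⟩ h) id
  exact (Nat.lt_succ_self _).not_ge (le_sup (f := id) (hCB hsucc))

theorem sup_injOn_children (hS : IsIntervalForest 1 n S) :
    Set.InjOn (fun B : Finset ℕ => B.sup id) (children n S A) := by
  intro B hB C hC (heq : B.sup id = C.sup id)
  have hBmax := (mem_children_iff_maximal hS).1 hB
  have hCmax := (mem_children_iff_maximal hS).1 hC
  have hsupB := sup_mem_of_mem_vertices hS hBmax.prop.1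
  have hsupC := sup_mem_of_mem_vertices hS hCmax.prop.1
  rcases subset_or_subset_of_mem_vertices hS hBmax.prop.1 hCmax.prop.1 hsupB (heq ▸ hsupC)
    with h | h
  · exact hBmax.eq_of_le hCmax.prop h
  · exact (hCmax.eq_of_le hBmax.prop h).symm

theorem exists_children_sup_eq (hS : IsIntervalForest 1 n S) (hA : A ∈ S) {x : ℕ}
    (hx : x ∈ childEnds S A) : ∃ B ∈ children n S A, B.sup id = x := by
  classical
  obtain ⟨hxA, hcut⟩ := mem_childEnds.1 hx
  have hleaf : {x} ∈ vertices n S := mem_vertices.2 (.inr ⟨x, hS.mem_Icc_of_mem hA hxA, rfl⟩)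
  have hleafA : {x} ⊂ A := by
    obtain ⟨p, q, -, hpq, -, rfl⟩ := hS.exists_eq_Icc A hA
    refine (singleton_subset_iff.2 hxA).ssubset_of_ne fun h => ?_
    have := congrArg card h
    rw [card_singleton, Nat.card_Icc] at this
    lia
  obtain ⟨B, hxB, hB⟩ := exists_le_maximal {B ∈ vertices n S | B ⊂ A}
    (mem_filter.2 ⟨hleaf, hleafA⟩)
  simp only [mem_filter] at hB
  obtain ⟨p, q, hpq, rfl, hinner⟩ := exists_eq_Icc_of_mem_vertices hS hB.prop.1
  refine ⟨_, (mem_children_iff_maximal hS).2 hB, ?_⟩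
  have hxpq := singleton_subset_iff.1 hxB
  rw [sup_id_Icc hpq]
  by_contra hqx
  obtain ⟨hpx, hxq⟩ := mem_Icc.1 hxpq
  exact hcut _ (hinner (by lia)) hB.prop.2 hxpq (mem_Icc.2 ⟨by lia, by lia⟩)

theorem card_children (hS : IsIntervalForest 1 n S) (hA : A ∈ S) :
    #(children n S A) = #(childEnds S A) :=
  card_nbij (fun B => B.sup id) (fun _ => sup_mem_childEnds hS) (sup_injOn_children hS)
    fun _ => exists_children_sup_eq hS hA

theorem count_outDegrees (hS : IsIntervalForest 1 n S) (c : ℕ) :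
    (outDegrees S).count c = #{A ∈ S | #(children n S A) = c} := by
  rw [outDegrees, Multiset.count_map, ← filter_val, card_val]
  exact congrArg _ (filter_congr fun A hA => by rw [card_children hS hA, eq_comm])

end Children

theorem isIntNested_iff {n : ℕ} (hn : 2 ≤ n) (k : ℕ) (S : Finset (Finset ℕ)) :
    IsIntNested n k S ↔
      IsIntervalForest 1 n S ∧ #(blockEnds (Icc 1 n) S) = 1 ∧ (outDegrees S).card = k := by
  rw [outDegrees, Multiset.card_map, card_val]
  constructor
  · rintro ⟨hcard, hroot, hinterval, hnested⟩
    have hS : IsIntervalForest 1 n S := by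
      refine ⟨fun A hA => ?_, hnested⟩
      obtain ⟨htwo, p, q, hp, -, hq, rfl⟩ := hinterval A hA
      rw [Nat.card_Icc] at htwo
      exact ⟨p, q, hp, by lia, hq, rfl⟩
    exact ⟨hS, (hS.Icc_mem_iff_card_blockEnds_eq_one hn).1 hroot, hcard⟩
  · rintro ⟨hS, hroot, hcard⟩
    refine ⟨hcard, (hS.Icc_mem_iff_card_blockEnds_eq_one hn).2 hroot, fun A hA => ?_,
      hS.nested_or_disjoint⟩
    obtain ⟨p, q, hp, hpq, hq, rfl⟩ := hS.exists_eq_Icc A hA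
    exact ⟨by rw [Nat.card_Icc]; lia, p, q, hp, hpq.le, hq, rfl⟩

theorem card_isIntNested_of_type {n : ℕ} (hn : 2 ≤ n) {ι : Type*} [Fintype ι] {d : ι → ℕ}
    (hd : d.Injective) (m : ι → ℕ) :
    Nat.card {S : Finset (Finset ℕ) // IsIntNested n (∑ j, m j) S ∧
        ∀ j, m j = #{A ∈ S | #(children n S A) + 1 = d j + 1}} =
      #(intervalForests 1 n 1 (∑ j, Multiset.replicate (m j) (d j))) := by
  refine Nat.subtype_card _ fun S => ?_
  rw [mem_intervalForests, eq_sum_replicate_iff hd, isIntNested_iff hn, and_assoc, and_assoc]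
  refine and_congr_right fun hS => and_congr_right fun _ => and_congr_right fun _ => ?_
  simp only [count_outDegrees hS, Nat.add_right_cancel_iff, eq_comm]

end Dissection

/-- The number of dissections of a convex `(n+1)`-gon with labelled edges by `k-1`
noncrossing diagonals of type `(i₁^{m₁},...,i_s^{m_s})` equals
`(n+k-1)! / (n! · m₁! ⋯ m_s!)` (stated multiplicatively). -/
theorem stmt13 (n k : ℕ) (hn : 2 ≤ n) (hk1 : 1 ≤ k) (hk : k ≤ n - 1)
    (s : ℕ) (i m : Fin s → ℕ)
    (hmono : StrictMono i) (hi3 : ∀ j, 3 ≤ i j) (hin : ∀ j, i j ≤ n + 1)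
    (hm1 : ∀ j, 1 ≤ m j)
    (hsum : ∑ j, m j = k) (hsum2 : ∑ j, i j * m j = n + 2 * k - 1) :
    n.factorial * (∏ j, (m j).factorial) *
        Nat.card {S : Finset (Finset ℕ) // IsIntNested n k S ∧
          ∀ j, m j = (S.filter (fun A => (children n S A).card + 1 = i j)).card} =
      (n + k - 1).factorial := by
  obtain ⟨d, rfl⟩ : ∃ d : Fin s → ℕ, i = fun j => d j + 1 :=
    ⟨fun j => i j - 1, funext fun j => by have := hi3 j; lia⟩
  subst hsum
  have d_injective : d.Injective := fun j l h => hmono.injective (congrArg (· + 1) h)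
  set μ := ∑ j, Multiset.replicate (m j) (d j)
  have two_le : ∀ c ∈ μ, 2 ≤ c := fun c hc => by
    obtain ⟨j, rfl⟩ := Dissection.exists_eq_of_mem_sum_replicate hc
    have := hi3 j
    lia
  have card_μ : μ.card = ∑ j, m j := Dissection.card_sum_replicate d m
  have sum_μ : μ.sum + ∑ j, m j = n + 2 * ∑ j, m j - 1 := by
    rw [Dissection.sum_sum_replicate, ← Finset.sum_add_distrib, ← hsum2]
    exact Finset.sum_congr rfl fun j _ => by ring
  have count := Dissection.factorial_mul_card_intervalForests (n + ∑ j, m j - 1) 1 n n 1 μ two_le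
    (Nat.add_comm 1 n) (by lia) (by lia)
  rwa [Dissection.multiplicityFactorial_sum_replicate d_injective, one_mul,
    ← Dissection.card_isIntNested_of_type hn d_injective] at count
end
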